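/- Let C be a commutative Noetherian ring with Krull dimension D < ∞ and let A = C[x_1,…,x_n]. Then for every r ≥ max(3, D+2), every matrix g in the odd split orthogonal group O(2r+1, A) can be reduced, by multiplying from the left by at most N = n(12r−8) + (nD + r(r−1)/2)·(r(r−1)/2 + ⌈(r−1)/2⌉ + 9r−2) + 11r−9 elementary orthogonal transvections, to a matrix of block-diagonal shape diag(1, β, 1) with β in O(2r−1, A) (β occupying the rows/columns indexed 2,…,r,0,−r,…,−2). -/

import Mathlib

open Matrix

section OddDefs

variable {R : Type*} [CommRing R]

/-- Position of the middle basis vector `e_0` in the basis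
`e_1,…,e_r,e_0,e_{-r},…,e_{-1}` of `R^{2r+1}`. -/
def midO (r : ℕ) : Fin (2 * r + 1) := ⟨r, by omega⟩

/-- Position of `e_{-i}` given the position of `e_i` (odd case); fixes the middle position. -/
def negO (r : ℕ) (i : Fin (2 * r + 1)) : Fin (2 * r + 1) := ⟨2 * r - i.val, by omega⟩

/-- The split quadratic form `q(x) = x_0^2 + ∑_{i=1}^r x_i x_{-i}` on `R^{2r+1}`. -/
def quadO (r : ℕ) (x : Fin (2 * r + 1) → R) : R :=
  x (midO r) * x (midO r) + ∑ i : Fin r, x ⟨i.val, by omega⟩ * x ⟨2 * r - i.val, by omega⟩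

/-- The odd split orthogonal group `O(2r+1,R)`, as a set of matrices. -/
def OO (r : ℕ) (R : Type*) [CommRing R] : Set (Matrix (Fin (2 * r + 1)) (Fin (2 * r + 1)) R) :=
  {g | IsUnit g ∧ ∀ x : Fin (2 * r + 1) → R, quadO r (g.mulVec x) = quadO r x}

/-- Long root elementary transvection `T_{i,j}(ξ) = e + ξ e_{i,j} - ξ e_{-j,-i}` (odd case). -/
def TOlong (r : ℕ) (i j : Fin (2 * r + 1)) (ξ : R) :
    Matrix (Fin (2 * r + 1)) (Fin (2 * r + 1)) R :=
  1 + ξ • Matrix.single i j 1 - ξ • Matrix.single (negO r j) (negO r i) 1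

/-- Short root elementary transvection
`T_{i,0}(ξ) = e + 2ξ e_{i,0} - ξ e_{0,-i} - ξ² e_{i,-i}`. -/
def TOshort (r : ℕ) (i : Fin (2 * r + 1)) (ξ : R) :
    Matrix (Fin (2 * r + 1)) (Fin (2 * r + 1)) R :=
  1 + (2 * ξ) • Matrix.single i (midO r) 1
    - ξ • Matrix.single (midO r) (negO r i) 1
    - (ξ * ξ) • Matrix.single i (negO r i) 1

/-- Being an elementary orthogonal transvection (odd case). -/
def IsElemO (r : ℕ) (g : Matrix (Fin (2 * r + 1)) (Fin (2 * r + 1)) R) : Prop :=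
  (∃ i j : Fin (2 * r + 1), ∃ ξ : R, i ≠ midO r ∧ j ≠ midO r ∧ i ≠ j ∧ i ≠ negO r j ∧
      g = TOlong r i j ξ) ∨
  (∃ i : Fin (2 * r + 1), ∃ ξ : R, i ≠ midO r ∧ g = TOshort r i ξ)

/-- `EO(2r+1,R)^{≤N}` : products of at most `N` elementary orthogonal transvections. -/
def EOO (r N : ℕ) (R : Type*) [CommRing R] :
    Set (Matrix (Fin (2 * r + 1)) (Fin (2 * r + 1)) R) :=
  {g | ∃ L : List (Matrix (Fin (2 * r + 1)) (Fin (2 * r + 1)) R),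
    L.length ≤ N ∧ (∀ m ∈ L, IsElemO r m) ∧ g = L.prod}

/-- `IUm_{2r+1}(R)` : columns `b` with `q(b) = 0` such that the row
`(b_1,…,b_r,2b_0,b_{-r},…,b_{-1})` is unimodular. -/
def IUmO (r : ℕ) (R : Type*) [CommRing R] : Set (Fin (2 * r + 1) → R) :=
  {b | Ideal.span (Set.range fun i => if i = midO r then 2 * b i else b i) = ⊤ ∧ quadO r b = 0}

end OddDefs

set_option linter.unusedSimpArgs false
set_option linter.unusedVariables false
namespace OddRed

/-- A column vector split in three blocks. -/
@[ext] structure TV (r : ℕ) (R : Type*) where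
  u : Fin r → R
  w : R
  v : Fin r → R

/-- The five kinds of elementary moves. -/
inductive Op (r : ℕ) (R : Type*) where
  | uu (i j : Fin r) (h : i ≠ j) (ξ : R)
  | uv (i j : Fin r) (h : i ≠ j) (ξ : R)
  | vu (i j : Fin r) (h : i ≠ j) (ξ : R)
  | vw (i : Fin r) (ξ : R)
  | uw (i : Fin r) (ξ : R)

section
variable {R : Type*} [CommRing R] {r : ℕ}

/-- Action of a move on a vector. -/
def Op.act : Op r R → TV r R → TV r R
  | .uu i j _ ξ, b => ⟨b.u + Pi.single i (ξ * b.u j), b.w, b.v - Pi.single j (ξ * b.v i)⟩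
  | .uv i j _ ξ, b => ⟨b.u + Pi.single i (ξ * b.v j) - Pi.single j (ξ * b.v i), b.w, b.v⟩
  | .vu i j _ ξ, b => ⟨b.u, b.w, b.v + Pi.single i (ξ * b.u j) - Pi.single j (ξ * b.u i)⟩
  | .vw i ξ, b => ⟨b.u, b.w - ξ * b.u i, b.v + Pi.single i (2 * ξ * b.w - ξ * ξ * b.u i)⟩
  | .uw i ξ, b => ⟨b.u + Pi.single i (2 * ξ * b.w - ξ * ξ * b.v i), b.w - ξ * b.v i, b.v⟩

/-- Inverse move. -/
def Op.inv : Op r R → Op r R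
  | .uu i j h ξ => .uu i j h (-ξ)
  | .uv i j h ξ => .uv i j h (-ξ)
  | .vu i j h ξ => .vu i j h (-ξ)
  | .vw i ξ => .vw i (-ξ)
  | .uw i ξ => .uw i (-ξ)

theorem Op.inv_act (o : Op r R) (b : TV r R) : o.inv.act (o.act b) = b := by
  cases o with
  | uu i j h ξ =>
    ext k <;> simp [Op.inv, Op.act, Pi.single_apply, h, h.symm] <;> split_ifs <;> ring
  | uv i j h ξ =>
    ext k <;> simp [Op.inv, Op.act, Pi.single_apply]; split_ifs <;> ring
  | vu i j h ξ =>
    ext k <;> simp [Op.inv, Op.act, Pi.single_apply]; split_ifs <;> ring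
  | vw i ξ =>
    ext k <;> simp [Op.inv, Op.act, Pi.single_apply]
    split_ifs <;> ring
  | uw i ξ =>
    ext k <;> simp [Op.inv, Op.act, Pi.single_apply]
    split_ifs <;> ring

theorem Op.inv_inv (o : Op r R) : o.inv.inv = o := by
  cases o <;> simp [Op.inv]

/-- Quadratic form. -/
def TV.q (b : TV r R) : R := b.w * b.w + ∑ i, b.u i * b.v i

theorem Op.q_act (o : Op r R) (b : TV r R) : (o.act b).q = b.q := by
  have key : ∀ (f : Fin r → R) (i : Fin r) (x : R), ∑ k, f k * (Pi.single i x : Fin r → R) k = f i * x := by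
    intro f i x
    rw [Finset.sum_eq_single i] <;> simp +contextual [Pi.single_apply]
  have key' : ∀ (f : Fin r → R) (i : Fin r) (x : R), ∑ k, (Pi.single i x : Fin r → R) k * f k = x * f i := by
    intro f i x
    rw [Finset.sum_eq_single i] <;> simp +contextual [Pi.single_apply]
  cases o with
  | uu i j h ξ =>
    simp only [TV.q, Op.act, Pi.add_apply, Pi.sub_apply, add_mul, mul_sub,
      Finset.sum_add_distrib, Finset.sum_sub_distrib, key, key']
    simp [h, h.symm]; ring
  | uv i j h ξ =>
    simp only [TV.q, Op.act, Pi.add_apply, Pi.sub_apply, add_mul, sub_mul,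
      Finset.sum_add_distrib, Finset.sum_sub_distrib, key, key']
    ring
  | vu i j h ξ =>
    simp only [TV.q, Op.act, Pi.add_apply, Pi.sub_apply, mul_add, mul_sub,
      Finset.sum_add_distrib, Finset.sum_sub_distrib, key, key']
    ring
  | vw i ξ =>
    simp only [TV.q, Op.act, Pi.add_apply, Pi.sub_apply, mul_add,
      Finset.sum_add_distrib, Finset.sum_sub_distrib, key, key']
    ring
  | uw i ξ =>
    simp only [TV.q, Op.act, Pi.add_apply, Pi.sub_apply, add_mul,
      Finset.sum_add_distrib, Finset.sum_sub_distrib, key, key']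
    ring

/-- All coordinates in an ideal. -/
def TV.In (I : Ideal R) (b : TV r R) : Prop := (∀ i, b.u i ∈ I) ∧ b.w ∈ I ∧ ∀ i, b.v i ∈ I

theorem TV.In.act {I : Ideal R} {b : TV r R} (h : b.In I) (o : Op r R) : (o.act b).In I := by
  obtain ⟨h1, h2, h3⟩ := h
  have hs : ∀ (i k : Fin r) (x : R), x ∈ I → (Pi.single i x : Fin r → R) k ∈ I := by
    intro i k x hx
    rw [Pi.single_apply]; split_ifs
    · exact hx
    · exact I.zero_mem
  cases o with
  | uu i j h ξ =>
    exact ⟨fun k => I.add_mem (h1 k) (hs _ _ _ (I.mul_mem_left _ (h1 _))), h2,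
      fun k => I.sub_mem (h3 k) (hs _ _ _ (I.mul_mem_left _ (h3 _)))⟩
  | uv i j h ξ =>
    exact ⟨fun k => I.sub_mem (I.add_mem (h1 k) (hs _ _ _ (I.mul_mem_left _ (h3 _))))
      (hs _ _ _ (I.mul_mem_left _ (h3 _))), h2, h3⟩
  | vu i j h ξ =>
    exact ⟨h1, h2, fun k => I.sub_mem (I.add_mem (h3 k) (hs _ _ _ (I.mul_mem_left _ (h1 _))))
      (hs _ _ _ (I.mul_mem_left _ (h1 _)))⟩
  | vw i ξ =>
    exact ⟨h1, I.sub_mem h2 (I.mul_mem_left _ (h1 _)), fun k => I.add_mem (h3 k)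
      (hs _ _ _ (I.sub_mem (I.mul_mem_left _ h2) (I.mul_mem_left _ (h1 _))))⟩
  | uw i ξ =>
    exact ⟨fun k => I.add_mem (h1 k)
      (hs _ _ _ (I.sub_mem (I.mul_mem_left _ h2) (I.mul_mem_left _ (h3 _)))),
      I.sub_mem h2 (I.mul_mem_left _ (h3 _)), h3⟩

/-- Unimodular. -/
def TV.Uni (b : TV r R) : Prop := ∀ P : Ideal R, P.IsPrime → ¬ b.In P

theorem TV.Uni.act {b : TV r R} (h : b.Uni) (o : Op r R) : (o.act b).Uni := by
  intro P hP hI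
  apply h P hP
  have := hI.act o.inv
  rwa [Op.inv_act] at this

/-- apply a list of moves -/
def run (L : List (Op r R)) (b : TV r R) : TV r R := L.foldr (fun o c => o.act c) b

theorem run_append (L M : List (Op r R)) (b : TV r R) : run (L ++ M) b = run L (run M b) := by
  simp [run]

/-- Reachability by at most `k` moves. -/
def Reach (k : ℕ) (b c : TV r R) : Prop := ∃ L : List (Op r R), L.length ≤ k ∧ run L b = c

theorem Reach.refl (b : TV r R) : Reach 0 b b := ⟨[], by simp, rfl⟩

theorem Reach.mono {k l : ℕ} {b c : TV r R} (h : Reach k b c) (hkl : k ≤ l) : Reach l b c := by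
  obtain ⟨L, h1, h2⟩ := h
  exact ⟨L, h1.trans hkl, h2⟩

theorem Reach.trans {k l : ℕ} {b c d : TV r R} (h : Reach k b c) (h' : Reach l c d) :
    Reach (k + l) b d := by
  obtain ⟨L, h1, rfl⟩ := h
  obtain ⟨M, h3, rfl⟩ := h'
  exact ⟨M ++ L, by simp; omega, run_append _ _ _⟩

theorem Reach.one (o : Op r R) (b : TV r R) : Reach 1 b (o.act b) := ⟨[o], by simp, rfl⟩

theorem Reach.symm {k : ℕ} {b c : TV r R} (h : Reach k b c) : Reach k c b := by
  obtain ⟨L, h1, rfl⟩ := h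
  induction L generalizing k with
  | nil => exact (Reach.refl b).mono (Nat.zero_le _)
  | cons o L ih =>
    obtain ⟨l, rfl⟩ : ∃ l, k = 1 + l := ⟨k - 1, by simp at h1; omega⟩
    have h2 := Reach.one o.inv (run (o :: L) b)
    have h3 : o.inv.act (run (o :: L) b) = run L b := Op.inv_act _ _
    rw [h3] at h2
    exact h2.trans (ih (by simp at h1; omega))

theorem Reach.q_eq {k : ℕ} {b c : TV r R} (h : Reach k b c) : c.q = b.q := by
  obtain ⟨L, h1, rfl⟩ := h
  clear h1
  induction L with
  | nil => rfl
  | cons o L ih => exact (Op.q_act _ _).trans ih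

theorem Reach.uni {k : ℕ} {b c : TV r R} (h : Reach k b c) (hb : b.Uni) : c.Uni := by
  obtain ⟨L, h1, rfl⟩ := h
  clear h1
  induction L with
  | nil => exact hb
  | cons o L ih => exact ih.act _

theorem Reach.in {k : ℕ} {b c : TV r R} (h : Reach k b c) {I : Ideal R} (hb : b.In I) : c.In I := by
  obtain ⟨L, h1, rfl⟩ := h
  clear h1
  induction L with
  | nil => exact hb
  | cons o L ih => exact ih.act _

theorem Reach.uu {b : TV r R} {i j : Fin r} (h : i ≠ j) (ξ : R) :
    Reach 1 b ⟨b.u + Pi.single i (ξ * b.u j), b.w, b.v - Pi.single j (ξ * b.v i)⟩ :=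
  Reach.one (.uu i j h ξ) b
theorem Reach.uv {b : TV r R} {i j : Fin r} (h : i ≠ j) (ξ : R) :
    Reach 1 b ⟨b.u + Pi.single i (ξ * b.v j) - Pi.single j (ξ * b.v i), b.w, b.v⟩ :=
  Reach.one (.uv i j h ξ) b
theorem Reach.vu {b : TV r R} {i j : Fin r} (h : i ≠ j) (ξ : R) :
    Reach 1 b ⟨b.u, b.w, b.v + Pi.single i (ξ * b.u j) - Pi.single j (ξ * b.u i)⟩ :=
  Reach.one (.vu i j h ξ) b
theorem Reach.vw {b : TV r R} (i : Fin r) (ξ : R) :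
    Reach 1 b ⟨b.u, b.w - ξ * b.u i, b.v + Pi.single i (2 * ξ * b.w - ξ * ξ * b.u i)⟩ :=
  Reach.one (.vw i ξ) b
theorem Reach.uw {b : TV r R} (i : Fin r) (ξ : R) :
    Reach 1 b ⟨b.u + Pi.single i (2 * ξ * b.w - ξ * ξ * b.v i), b.w - ξ * b.v i, b.v⟩ :=
  Reach.one (.uw i ξ) b

end

section
variable {R S : Type*} [CommRing R] [CommRing S] {r : ℕ}

/-- Apply a ring hom to coordinates. -/
def TV.map (f : R →+* S) (b : TV r R) : TV r S := ⟨f ∘ b.u, f b.w, f ∘ b.v⟩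

/-- Apply a ring hom to a move. -/
def Op.map (f : R →+* S) : Op r R → Op r S
  | .uu i j h ξ => .uu i j h (f ξ)
  | .uv i j h ξ => .uv i j h (f ξ)
  | .vu i j h ξ => .vu i j h (f ξ)
  | .vw i ξ => .vw i (f ξ)
  | .uw i ξ => .uw i (f ξ)

theorem Op.map_act (f : R →+* S) (o : Op r R) (b : TV r R) :
    (o.map f).act (b.map f) = (o.act b).map f := by
  cases o <;> ext k <;> simp [Op.map, Op.act, TV.map, Pi.single_apply, apply_ite f, map_ofNat f 2]

theorem Reach.map (f : R →+* S) {k : ℕ} {b c : TV r R} (h : Reach k b c) :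
    Reach k (b.map f) (c.map f) := by
  obtain ⟨L, h1, rfl⟩ := h
  refine ⟨L.map (Op.map f), by simpa using h1, ?_⟩
  clear h1
  induction L with
  | nil => rfl
  | cons o L ih =>
    change (o.map f).act (run (L.map (Op.map f)) (b.map f)) = (o.act (run L b)).map f
    rw [ih, Op.map_act]

theorem TV.q_map (f : R →+* S) (b : TV r R) : (b.map f).q = f b.q := by
  simp [TV.q, TV.map]

theorem TV.Uni.map (f : R →+* S) {b : TV r R} (h : b.Uni) : (b.map f).Uni := by
  intro P hP hI
  exact h (P.comap f) (hP.comap f) ⟨fun i => hI.1 i, hI.2.1, fun i => hI.2.2 i⟩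

/-- for isotropic vectors, `u` and `v` in a prime force `w` in. -/
theorem TV.In.of_uv {b : TV r R} (hq : b.q = 0) {P : Ideal R} (hP : P.IsPrime)
    (hu : ∀ i, b.u i ∈ P) (hv : ∀ i, b.v i ∈ P) : b.In P := by
  refine ⟨hu, ?_, hv⟩
  have h : b.w * b.w = - ∑ i, b.u i * b.v i := by
    unfold TV.q at hq; linear_combination hq
  have h2 : b.w * b.w ∈ P := by
    rw [h]
    exact P.neg_mem (P.sum_mem fun i _ => P.mul_mem_right _ (hu i))
  exact (hP.mem_or_mem h2).elim id id
end
end OddRed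

set_option linter.unusedSimpArgs false
set_option linter.unusedVariables false
namespace OddRed
section
variable {R : Type*} [CommRing R] {r : ℕ}

/-- Transvection `1 + x q^T` with `x = a (q_t e_p - q_p e_t)`. -/
def Phi (p s t : Fin r) (a qp qs qt : R) (b : TV r R) : TV r R :=
  ⟨b.u + Pi.single p (a * qt * (qp * b.u p + qs * b.u s + qt * b.u t))
      - Pi.single t (a * qp * (qp * b.u p + qs * b.u s + qt * b.u t)), b.w,
   b.v - Pi.single p (qp * (a * (qt * b.v p - qp * b.v t)))
     - Pi.single s (qs * (a * (qt * b.v p - qp * b.v t)))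
     - Pi.single t (qt * (a * (qt * b.v p - qp * b.v t)))⟩

theorem phi_run (p s t : Fin r) (hps : p ≠ s) (hpt : p ≠ t) (hst : s ≠ t) (a qp qs qt : R) (b : TV r R) :
    run [.uu s p hps.symm (-qp), .uu s t hst (-qt), .uu p s hps (a * qt), .uu t s hst.symm (-(a * qp)),
      .uu s p hps.symm qp, .uu s t hst qt, .uu t s hst.symm (-((qs - 1) * a * qp)),
      .uu p s hps ((qs - 1) * a * qt)] b = Phi p s t a qp qs qt b := by
  ext m
  · by_cases h1 : m = p
    · subst h1
      simp [run, Op.act, Phi, Pi.single_apply, hps, hpt, hst, hps.symm, hpt.symm, hst.symm]; ring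
    by_cases h2 : m = s
    · subst h2
      simp [run, Op.act, Phi, Pi.single_apply, hps, hpt, hst, hps.symm, hpt.symm, hst.symm]; ring
    by_cases h3 : m = t
    · subst h3
      simp [run, Op.act, Phi, Pi.single_apply, hps, hpt, hst, hps.symm, hpt.symm, hst.symm]; ring
    simp [run, Op.act, Phi, Pi.single_apply, h1, h2, h3]
  · simp [run, Op.act, Phi]
  · by_cases h1 : m = p
    · subst h1
      simp [run, Op.act, Phi, Pi.single_apply, hps, hpt, hst, hps.symm, hpt.symm, hst.symm]; ring
    by_cases h2 : m = s
    · subst h2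
      simp [run, Op.act, Phi, Pi.single_apply, hps, hpt, hst, hps.symm, hpt.symm, hst.symm]; ring
    by_cases h3 : m = t
    · subst h3
      simp [run, Op.act, Phi, Pi.single_apply, hps, hpt, hst, hps.symm, hpt.symm, hst.symm]; ring
    simp [run, Op.act, Phi, Pi.single_apply, h1, h2, h3]

theorem phiA (p s t : Fin r) (hps : p ≠ s) (hpt : p ≠ t) (hst : s ≠ t) (a qp qs qt : R) (b : TV r R) :
    Reach 7 b ((Op.uu s p hps.symm qp).act (Phi p s t a qp qs qt b)) := by
  rw [← phi_run p s t hps hpt hst]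
  refine ⟨[.uu s t hst (-qt), .uu p s hps (a * qt), .uu t s hst.symm (-(a * qp)),
      .uu s p hps.symm qp, .uu s t hst qt, .uu t s hst.symm (-((qs - 1) * a * qp)),
      .uu p s hps ((qs - 1) * a * qt)], by simp, ?_⟩
  have := Op.inv_act (Op.uu s p hps.symm (-qp)) (run [.uu s t hst (-qt), .uu p s hps (a * qt), .uu t s hst.symm (-(a * qp)),
      .uu s p hps.symm qp, .uu s t hst qt, .uu t s hst.symm (-((qs - 1) * a * qp)),
      .uu p s hps ((qs - 1) * a * qt)] b)
  simp only [Op.inv, neg_neg] at this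
  exact this.symm

theorem phiB (p s t : Fin r) (hps : p ≠ s) (hpt : p ≠ t) (hst : s ≠ t) (a qp qs qt : R) (b : TV r R) :
    Reach 7 ((Op.uu p s hps ((qs - 1) * a * qt)).act b) (Phi p s t a qp qs qt b) := by
  rw [← phi_run p s t hps hpt hst]
  exact ⟨[.uu s p hps.symm (-qp), .uu s t hst (-qt), .uu p s hps (a * qt), .uu t s hst.symm (-(a * qp)),
      .uu s p hps.symm qp, .uu s t hst qt, .uu t s hst.symm (-((qs - 1) * a * qp))], by simp, rfl⟩

theorem uu_uu (i j : Fin r) (h : i ≠ j) (x y : R) (b : TV r R) :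
    Reach 1 ((Op.uu i j h x).act b) ((Op.uu i j h y).act b) := by
  refine ⟨[.uu i j h (y - x)], by simp, ?_⟩
  ext m <;> simp [run, Op.act, Pi.single_apply, h, h.symm] <;> split_ifs <;> ring

theorem M_part {i1 i2 i3 : Fin r} (h12 : i1 ≠ i2) (h13 : i1 ≠ i3) (h23 : i2 ≠ i3) (b : TV r R)
    (s c1 c2 α1 α2 : R) (hs : c1 * b.u i1 + c2 * b.u i2 = s) :
    ∃ d : TV r R, Reach 15 b d ∧ d.u i1 = b.u i1 + s ^ 6 * α1 ∧ d.u i2 = b.u i2 + s ^ 6 * α2 ∧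
      d.w = b.w ∧ (∀ i, s ^ 3 ∣ d.u i - b.u i) ∧ ∀ i, s ^ 3 ∣ d.v i - b.v i := by
  set κ := s - b.u i3 with hκ
  set d1 := Phi i1 i2 i3 (s ^ 3 * α1) (κ * c1) (κ * c2) s b with hd1
  set d := Phi i2 i1 i3 (s ^ 3 * α2) (κ * c2) (κ * c1) s d1 with hd
  have hd1u : ∀ i, d1.u i = b.u i + (if i = i1 then s ^ 6 * α1 else 0)
      - (if i = i3 then s ^ 5 * α1 * κ * c1 else 0) := by
    intro i
    simp only [hd1, Phi, Pi.add_apply, Pi.sub_apply, Pi.single_apply]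
    have : κ * c1 * b.u i1 + κ * c2 * b.u i2 + s * b.u i3 = s ^ 2 := by
      rw [hκ]; linear_combination (s - b.u i3) * hs
    rw [this]
    split_ifs <;> ring
  have hdu : ∀ i, d.u i = d1.u i + (if i = i2 then s ^ 6 * α2 else 0)
      - (if i = i3 then s ^ 5 * α2 * κ * c2 else 0) := by
    intro i
    simp only [hd, Phi, Pi.add_apply, Pi.sub_apply, Pi.single_apply]
    have : κ * c2 * d1.u i2 + κ * c1 * d1.u i1 + s * d1.u i3 = s ^ 2 := by
      simp only [hd1u, h12, h12.symm, h13, h13.symm, h23, h23.symm, if_true, if_false]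
      rw [hκ]; linear_combination (s - b.u i3) * hs
    rw [this]
    split_ifs <;> ring
  refine ⟨d, ?_, ?_, ?_, ?_, ?_, ?_⟩
  · have a1 := phiA i1 i2 i3 h12 h13 h23 (s ^ 3 * α1) (κ * c1) (κ * c2) s b
    have a2 := phiB i2 i1 i3 h12.symm h23 h13 (s ^ 3 * α2) (κ * c2) (κ * c1) s d1
    have := (a1.trans (uu_uu i2 i1 h12.symm _ _ _)).trans a2
    exact this
  · rw [hdu, hd1u]; simp [h12, h12.symm, h13, h13.symm, h23, h23.symm]
  · rw [hdu, hd1u]; simp [h12, h12.symm, h13, h13.symm, h23, h23.symm]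
  · simp [hd, hd1, Phi]
  · intro i
    rw [hdu, hd1u]
    refine ⟨(if i = i1 then s ^ 3 * α1 else 0)
      - (if i = i3 then s ^ 2 * α1 * κ * c1 else 0) + (if i = i2 then s ^ 3 * α2 else 0)
      - (if i = i3 then s ^ 2 * α2 * κ * c2 else 0), ?_⟩
    split_ifs <;> ring
  · intro i
    have e1 : s ^ 3 ∣ d.v i - d1.v i := by
      refine ⟨-((if i = i2 then (κ * c2 * ( α2 * (s * d1.v i2 - κ * c2 * d1.v i3))) else 0)
       + (if i = i1 then (κ * c1 * ( α2 * (s * d1.v i2 - κ * c2 * d1.v i3))) else 0)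
       + (if i = i3 then (s * ( α2 * (s * d1.v i2 - κ * c2 * d1.v i3))) else 0)), ?_⟩
      simp only [hd, Phi, Pi.add_apply, Pi.sub_apply, Pi.single_apply]
      split_ifs <;> ring
    have e2 : s ^ 3 ∣ d1.v i - b.v i := by
      refine ⟨-((if i = i1 then (κ * c1 * ( α1 * (s * b.v i1 - κ * c1 * b.v i3))) else 0)
       + (if i = i2 then (κ * c2 * ( α1 * (s * b.v i1 - κ * c1 * b.v i3))) else 0)
       + (if i = i3 then (s * ( α1 * (s * b.v i1 - κ * c1 * b.v i3))) else 0)), ?_⟩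
      simp only [hd1, Phi, Pi.add_apply, Pi.sub_apply, Pi.single_apply]
      split_ifs <;> ring
    simpa using dvd_add e1 e2

theorem fixU {i1 i2 : Fin r} (h12 : i1 ≠ i2) (b b' : TV r R) (s c1 c2 : R)
    (hs : c1 * b.u i1 + c2 * b.u i2 = s) (hu : ∀ i, s ^ 3 ∣ b'.u i - b.u i) (J : Finset (Fin r))
    (h1 : i1 ∉ J) (h2 : i2 ∉ J) :
    ∃ d : TV r R, Reach (2 * J.card) b d ∧ (∀ j ∈ J, d.u j = b'.u j) ∧ (∀ j ∉ J, d.u j = b.u j) ∧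
      d.w = b.w ∧ (∀ j, j ≠ i1 → j ≠ i2 → d.v j = b.v j) ∧ ∀ j, s ^ 2 ∣ d.v j - b.v j := by
  classical
  induction J using Finset.induction_on with
  | empty => exact ⟨b, Reach.refl b, by simp, by simp, rfl, by simp, by simp⟩
  | insert j J hj ih =>
    simp only [Finset.mem_insert, not_or] at h1 h2
    obtain ⟨d, hR, hd1, hd2, hd3, hd4, hd5⟩ := ih h1.2 h2.2
    obtain ⟨γ, hγ⟩ := hu j
    have hj1 : j ≠ i1 := fun h => h1.1 h.symm
    have hj2 : j ≠ i2 := fun h => h2.1 h.symm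
    have e1 := Reach.one (Op.uu j i1 hj1 (s ^ 2 * γ * c1)) d
    have e2 := Reach.one (Op.uu j i2 hj2 (s ^ 2 * γ * c2)) ((Op.uu j i1 hj1 (s ^ 2 * γ * c1)).act d)
    refine ⟨_, ((hR.trans e1).trans e2).mono ?_, ?_, ?_, ?_, ?_, ?_⟩
    · rw [Finset.card_insert_of_notMem hj]; omega
    · intro m hm
      rw [Finset.mem_insert] at hm
      by_cases hmj : m = j
      · subst hmj
        simp only [Op.act, Pi.add_apply, Pi.single_eq_same, Pi.single_eq_of_ne hj2.symm, hd2 _ hj,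
          hd2 _ h1.2, hd2 _ h2.2]
        linear_combination (s ^ 2 * γ) * hs - hγ
      · simp only [Op.act, Pi.add_apply, Pi.single_eq_of_ne hmj]
        simpa using hd1 m (hm.resolve_left hmj)
    · intro m hm
      simp only [Finset.mem_insert, not_or] at hm
      simpa [Op.act, Pi.single_eq_of_ne hm.1] using hd2 m hm.2
    · simpa [Op.act] using hd3
    · intro m hm1 hm2
      simpa [Op.act, Pi.single_eq_of_ne hm1, Pi.single_eq_of_ne hm2] using hd4 m hm1 hm2
    · intro m
      obtain ⟨e, he⟩ := hd5 m
      refine ⟨e - (if m = i1 then γ * c1 * d.v j else 0) - (if m = i2 then γ * c2 * d.v j else 0), ?_⟩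
      simp only [Op.act, Pi.sub_apply, Pi.single_apply, hj1, if_false]
      split_ifs <;> linear_combination he

theorem fixV {i1 i2 : Fin r} (h12 : i1 ≠ i2) (b b' : TV r R) (s c1 c2 : R)
    (hs : c1 * b.u i1 + c2 * b.u i2 = s) (J : Finset (Fin r))
    (hv : ∀ i ∈ J, s ^ 3 ∣ b'.v i - b.v i)
    (h1 : i1 ∉ J) (h2 : i2 ∉ J) :
    ∃ d : TV r R, Reach (2 * J.card) b d ∧ (∀ j ∈ J, d.v j = b'.v j) ∧
      (∀ j, j ∉ J → j ≠ i1 → j ≠ i2 → d.v j = b.v j) ∧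
      d.w = b.w ∧ d.u = b.u ∧ ∀ j, s ^ 2 ∣ d.v j - b.v j := by
  classical
  induction J using Finset.induction_on with
  | empty => exact ⟨b, Reach.refl b, by simp, by simp, rfl, by simp, by simp⟩
  | insert j J hj ih =>
    simp only [Finset.mem_insert, not_or] at h1 h2
    obtain ⟨d, hR, hd1, hd2, hd3, hd4, hd5⟩ := ih (fun i hi => hv i (Finset.mem_insert_of_mem hi)) h1.2 h2.2
    obtain ⟨γ, hγ⟩ := hv j (Finset.mem_insert_self _ _)
    have hj1 : j ≠ i1 := fun h => h1.1 h.symm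
    have hj2 : j ≠ i2 := fun h => h2.1 h.symm
    have e1 := Reach.one (Op.vu j i1 hj1 (s ^ 2 * γ * c1)) d
    have e2 := Reach.one (Op.vu j i2 hj2 (s ^ 2 * γ * c2)) ((Op.vu j i1 hj1 (s ^ 2 * γ * c1)).act d)
    refine ⟨_, ((hR.trans e1).trans e2).mono ?_, ?_, ?_, ?_, ?_, ?_⟩
    · rw [Finset.card_insert_of_notMem hj]; omega
    · intro m hm
      rw [Finset.mem_insert] at hm
      by_cases hmj : m = j
      · subst hmj
        simp only [Op.act, Pi.add_apply, Pi.sub_apply, Pi.single_eq_same, Pi.single_eq_of_ne hj2,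
          Pi.single_eq_of_ne hj1, hd2 _ hj hj1 hj2, hd4]
        linear_combination (s ^ 2 * γ) * hs - hγ
      · have hm' := hm.resolve_left hmj
        have hm1 : m ≠ i1 := fun h => h1.2 (h ▸ hm')
        have hm2 : m ≠ i2 := fun h => h2.2 (h ▸ hm')
        simpa [Op.act, Pi.single_eq_of_ne hmj, Pi.single_eq_of_ne hm1, Pi.single_eq_of_ne hm2] using hd1 m hm'
    · intro m hm hm1 hm2
      simp only [Finset.mem_insert, not_or] at hm
      simpa [Op.act, Pi.single_eq_of_ne hm.1, Pi.single_eq_of_ne hm1, Pi.single_eq_of_ne hm2] using hd2 m hm.2 hm1 hm2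
    · simpa [Op.act] using hd3
    · simpa [Op.act] using hd4
    · intro m
      obtain ⟨e, he⟩ := hd5 m
      refine ⟨e + (if m = j then γ * c1 * d.u i1 else 0) + (if m = j then γ * c2 * d.u i2 else 0)
         - (if m = i1 then γ * c1 * d.u j else 0) - (if m = i2 then γ * c2 * d.u j else 0), ?_⟩
      simp only [Op.act, Pi.add_apply, Pi.sub_apply, Pi.single_apply, hj1, if_false]
      split_ifs <;> linear_combination he

theorem Fix_part {i1 i2 : Fin r} (h12 : i1 ≠ i2) (b b' : TV r R)
    (s c1 c2 : R) (hs : c1 * b.u i1 + c2 * b.u i2 = s) (hsn : s ∈ nonZeroDivisors R)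
    (e1 : b'.u i1 = b.u i1) (e2 : b'.u i2 = b.u i2) (hq : b.q = b'.q)
    (hu : ∀ i, s ^ 3 ∣ b'.u i - b.u i) (hw : s ^ 3 ∣ b'.w - b.w) (hv : ∀ i, s ^ 3 ∣ b'.v i - b.v i) :
    Reach (2 * (r - 2) + 2 + 2 * (r - 2) + 1) b b' := by
  classical
  set J : Finset (Fin r) := (Finset.univ.erase i1).erase i2 with hJ
  have hJc : J.card = r - 2 := by
    rw [hJ, Finset.card_erase_of_mem (by simp [h12.symm]), Finset.card_erase_of_mem (by simp)]
    simp; omega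
  have h1 : i1 ∉ J := by simp [hJ]
  have h2 : i2 ∉ J := by simp [hJ]
  have hJm : ∀ j, j ≠ i1 → j ≠ i2 → j ∈ J := by intro j a b; simp [hJ, a, b]
  obtain ⟨d, hR, hd1, hd2, hd3, hd4, hd5⟩ := fixU h12 b b' s c1 c2 hs hu J h1 h2
  have hdu : d.u = b'.u := by
    funext j
    by_cases hj1 : j = i1
    · rw [hj1, hd2 _ h1, e1]
    by_cases hj2 : j = i2
    · rw [hj2, hd2 _ h2, e2]
    exact hd1 j (hJm j hj1 hj2)
  obtain ⟨γ, hγ⟩ := hw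
  set d' := (Op.vw i1 (-(s ^ 2 * γ * c1))).act d with hd'
  set d'' := (Op.vw i2 (-(s ^ 2 * γ * c2))).act d' with hd''
  have hR2 : Reach 2 d d'' := (Reach.one _ _).trans (Reach.one _ _)
  have hs' : c1 * b'.u i1 + c2 * b'.u i2 = s := by rw [e1, e2, hs]
  have hu2 : d''.u = b'.u := by simp [hd'', hd', Op.act, hdu]
  have hw2 : d''.w = b'.w := by
    simp only [hd'', hd', Op.act, hdu, hd3]
    linear_combination (s ^ 2 * γ) * hs' - hγ
  have hv2 : ∀ j, j ≠ i1 → j ≠ i2 → d''.v j = b.v j := by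
    intro j hj1 hj2
    simpa [hd'', hd', Op.act, Pi.single_eq_of_ne hj1, Pi.single_eq_of_ne hj2] using hd4 j hj1 hj2
  have hv2s : ∀ j, s ^ 2 ∣ d''.v j - b.v j := by
    intro j
    obtain ⟨e, he⟩ := hd5 j
    refine ⟨e + (if j = i1 then -(2 * γ * c1) * d.w - s ^ 2 * γ ^ 2 * c1 ^ 2 * d.u i1 else 0)
      + (if j = i2 then -(2 * γ * c2) * d'.w - s ^ 2 * γ ^ 2 * c2 ^ 2 * d.u i2 else 0), ?_⟩
    simp only [hd'', hd', Op.act, Pi.add_apply, Pi.single_apply]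
    split_ifs <;> linear_combination he
  obtain ⟨f, hRf, hf1, hf2, hf3, hf4, hf5⟩ := fixV h12 d'' b' s c1 c2 (by rw [hu2, hs']) J
    (by
      intro i hi
      have a1 : i ≠ i1 := fun h => h1 (h ▸ hi)
      have a2 : i ≠ i2 := fun h => h2 (h ▸ hi)
      rw [hv2 i a1 a2]; exact hv i) h1 h2
  have hfs : ∀ j, s ^ 2 ∣ b'.v j - f.v j := by
    intro j
    have a1 := hf5 j
    have a2 := hv2s j
    have a3 : s ^ 2 ∣ b'.v j - b.v j := (pow_dvd_pow s (by norm_num)).trans (hv j)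
    have : b'.v j - f.v j = (b'.v j - b.v j) - (d''.v j - b.v j) - (f.v j - d''.v j) := by ring
    rw [this]
    exact dvd_sub (dvd_sub a3 a2) a1
  obtain ⟨x1, hx1⟩ := hfs i1
  obtain ⟨x2, hx2⟩ := hfs i2
  have hfq : f.q = b'.q := by
    rw [hRf.q_eq, hR2.q_eq, hR.q_eq, hq]
  have hrel : b'.u i1 * (s * x1) + b'.u i2 * (s * x2) = 0 := by
    have h3 : s * (b'.u i1 * (s * x1) + b'.u i2 * (s * x2)) = 0 := by
      have h4 : ∑ j, b'.u j * (b'.v j - f.v j) = 0 := by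
        unfold TV.q at hfq
        rw [hf3, hw2, hf4, hu2] at hfq
        simp only [mul_sub, Finset.sum_sub_distrib]
        linear_combination -hfq
      rw [Fintype.sum_eq_add i1 i2 h12] at h4
      · rw [hx1, hx2] at h4
        linear_combination h4
      · intro j hj
        rw [hf1 j (hJm j hj.1 hj.2)]; ring
    exact (mul_left_mem_nonZeroDivisors_eq_zero_iff hsn).1 h3
  have hlast : (Op.vu i1 i2 h12 (c2 * (s * x1) - c1 * (s * x2))).act f = b' := by
    ext j
    · simp [Op.act, hf4, hu2]
    · simp [Op.act, hf3, hw2]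
    · simp only [Op.act, Pi.add_apply, Pi.sub_apply, hf4, hu2]
      by_cases hj1 : j = i1
      · subst hj1
        simp only [Pi.single_eq_same, Pi.single_eq_of_ne h12]
        linear_combination -hx1 - c1 * hrel + s * x1 * hs'
      by_cases hj2 : j = i2
      · subst hj2
        simp only [Pi.single_eq_same, Pi.single_eq_of_ne h12.symm]
        linear_combination -hx2 - c2 * hrel + s * x2 * hs'
      simp only [Pi.single_eq_of_ne hj1, Pi.single_eq_of_ne hj2]
      simpa using hf1 j (hJm j hj1 hj2)
  rw [hJc] at hR hRf
  rw [← hlast]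
  exact ((hR.trans hR2).trans hRf).trans (Reach.one _ _)

theorem S_lemma {i1 i2 i3 : Fin r} (h12 : i1 ≠ i2) (h13 : i1 ≠ i3) (h23 : i2 ≠ i3) (b b' : TV r R)
    (s c1 c2 c1' c2' : R) (hs : c1 * b.u i1 + c2 * b.u i2 = s)
    (hs' : c1' * b'.u i1 + c2' * b'.u i2 = s) (hsn : s ∈ nonZeroDivisors R) (hq : b.q = b'.q)
    (hu : ∀ i, s ^ 6 ∣ b'.u i - b.u i) (hw : s ^ 6 ∣ b'.w - b.w) (hv : ∀ i, s ^ 6 ∣ b'.v i - b.v i) :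
    Reach (15 + (2 * (r - 2) + 2 + 2 * (r - 2) + 1)) b b' := by
  obtain ⟨α1, ha1⟩ := hu i1
  obtain ⟨α2, ha2⟩ := hu i2
  obtain ⟨d, hR, k1, k2, k3, k4, k5⟩ := M_part h12 h13 h23 b s c1 c2 α1 α2 hs
  have p36 : s ^ 3 ∣ s ^ 6 := pow_dvd_pow s (by norm_num)
  have e1 : b'.u i1 = d.u i1 := by rw [k1, ← ha1]; ring
  have e2 : b'.u i2 = d.u i2 := by rw [k2, ← ha2]; ring
  refine hR.trans (Fix_part h12 d b' s c1' c2' (by rw [← e1, ← e2, hs']) hsn e1 e2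
    (by rw [hR.q_eq, hq]) ?_ ?_ ?_)
  · intro i
    simpa using dvd_sub (p36.trans (hu i)) (k4 i)
  · rw [k3]; exact p36.trans hw
  · intro i
    simpa using dvd_sub (p36.trans (hv i)) (k5 i)
end
end OddRed

set_option linter.unusedSimpArgs false
set_option linter.unusedVariables false
namespace OddRed
section
variable {R : Type*} [CommRing R]

theorem avoid {κ : Type*} (Ps : Finset (Ideal R)) (hp : ∀ P ∈ Ps, P.IsPrime) (a y : κ → R)
    (h : ∀ P ∈ Ps, ∃ k, a k ∉ P ∨ y k ∉ P) : ∃ ξ : R, ∀ P ∈ Ps, ∃ k, a k + ξ * y k ∉ P := by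
  classical
  induction hn : Ps.card generalizing Ps with
  | zero =>
    rw [Finset.card_eq_zero] at hn
    subst hn
    exact ⟨0, by simp⟩
  | succ n ih =>
    obtain ⟨Q, hQ⟩ := Ps.exists_minimal (Finset.card_pos.1 (by omega))
    have hQm := hQ.1
    obtain ⟨ξ, hξ⟩ := ih (Ps.erase Q) (fun P hP => hp P (Finset.mem_of_mem_erase hP))
      (fun P hP => h P (Finset.mem_of_mem_erase hP)) (by rw [Finset.card_erase_of_mem hQm]; omega)
    by_cases hk : ∃ k, a k + ξ * y k ∉ Q
    · refine ⟨ξ, fun P hP => ?_⟩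
      by_cases hPQ : P = Q
      · rw [hPQ]; exact hk
      · exact hξ P (Finset.mem_erase.2 ⟨hPQ, hP⟩)
    · push Not at hk
      have hQp := hp Q hQm
      obtain ⟨k, hk'⟩ : ∃ k, y k ∉ Q := by
        by_contra hcon
        push Not at hcon
        obtain ⟨k, hk1⟩ := h Q hQm
        rcases hk1 with h1 | h1
        · apply h1
          have := Q.sub_mem (hk k) (Q.mul_mem_left ξ (hcon k))
          simpa using this
        · exact h1 (hcon k)
      obtain ⟨e, he1, he2⟩ : ∃ e, e ∈ (Ps.erase Q).inf id ∧ e ∉ Q := by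
        have : ¬ (Ps.erase Q).inf id ≤ Q := by
          rw [hQp.inf_le']
          rintro ⟨P, hP, hPQ⟩
          rw [Finset.mem_erase] at hP
          exact hP.1 (le_antisymm hPQ (hQ.2 hP.2 hPQ))
        exact SetLike.not_le_iff_exists.1 this
      refine ⟨ξ + e, fun P hP => ?_⟩
      by_cases hPQ : P = Q
      · rw [hPQ]
        refine ⟨k, fun hh => ?_⟩
        have h2 := Q.sub_mem hh (hk k)
        have h3 : e * y k ∈ Q := by
          convert h2 using 1; ring
        exact (hQp.mem_or_mem h3).elim he2 hk'
      · have hP' := Finset.mem_erase.2 ⟨hPQ, hP⟩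
        obtain ⟨k, hk⟩ := hξ P hP'
        refine ⟨k, fun hh => hk ?_⟩
        have heP : e ∈ P := (Finset.inf_le hP' : (Ps.erase Q).inf id ≤ id P) he1
        have h2 := P.sub_mem hh (P.mul_mem_right (y k) heP)
        convert h2 using 1; ring

/-- scalar avoidance -/
theorem avoid1 (Ps : Finset (Ideal R)) (hp : ∀ P ∈ Ps, P.IsPrime) (a y : R)
    (h : ∀ P ∈ Ps, a ∉ P ∨ y ∉ P) : ∃ ξ : R, ∀ P ∈ Ps, a + ξ * y ∉ P := by
  obtain ⟨ξ, hξ⟩ := avoid Ps hp (fun _ : Unit => a) (fun _ => y) (fun P hP => ⟨(), h P hP⟩)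
  exact ⟨ξ, fun P hP => (hξ P hP).elim fun _ h => h⟩

theorem asr [IsNoetherianRing R] {ι : Type*} (J : Finset ι) (a : ι → R) (y : R) (I : Ideal R) :
    ∃ τ : ι → R, ∀ P : Ideal R, P.IsPrime → I ≤ P → y ∉ P → (∀ i ∈ J, a i + τ i * y ∈ P) →
      (J.card : ℕ∞) ≤ P.height := by
  classical
  induction J using Finset.induction_on with
  | empty => exact ⟨0, by simp⟩
  | insert j J hj ih =>
    obtain ⟨τ, hτ⟩ := ih
    set K : Ideal R := I ⊔ Ideal.span ((fun i => a i + τ i * y) '' J) with hK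
    have hfin := K.finite_minimalPrimes_of_isNoetherianRing
    obtain ⟨ξ, hξ⟩ := avoid1 (hfin.toFinset.filter fun P => y ∉ P)
      (by intro P hP; simp only [Finset.mem_filter, Set.Finite.mem_toFinset] at hP
          exact hP.1.1.1) (a j) y
      (by intro P hP; simp only [Finset.mem_filter, Set.Finite.mem_toFinset] at hP
          exact Or.inr hP.2)
    refine ⟨Function.update τ j ξ, fun P hP hI hy hJ => ?_⟩
    have hKP : K ≤ P := by
      rw [hK]
      refine sup_le hI (Ideal.span_le.2 ?_)
      rintro _ ⟨i, hi, rfl⟩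
      have := hJ i (Finset.mem_insert_of_mem hi)
      rwa [Function.update_of_ne (by rintro rfl; exact hj hi)] at this
    obtain ⟨Q, hQ, hQP⟩ := Ideal.exists_minimalPrimes_le hKP
    have hyQ : y ∉ Q := fun h => hy (hQP h)
    have hQp : Q.IsPrime := hQ.1.1
    have h1 := hτ Q hQp (le_sup_left.trans hQ.1.2) hyQ (by
      intro i hi
      exact hQ.1.2 (le_sup_right (a := I) (Ideal.subset_span ⟨i, hi, rfl⟩)))
    have h2 := hξ Q (by simp [hQ, hyQ])
    have h3 : Q < P := by
      refine lt_of_le_of_ne hQP ?_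
      rintro rfl
      have := hJ j (Finset.mem_insert_self _ _)
      rw [Function.update_self] at this
      exact h2 this
    have h4 := Ideal.height_add_one_le_of_lt_of_isPrime h3
    rw [Finset.card_insert_of_notMem hj]
    push_cast
    exact (add_le_add_left h1 1).trans h4

theorem unit_lemma [IsNoetherianRing R] (m : ℕ) (hm : ∀ P : Ideal R, P.IsPrime → P.height ≤ m)
    (G : R → Prop) (hG : ∀ Ps : Finset (Ideal R), (∀ P ∈ Ps, P.IsPrime) → ∃ s, G s ∧ ∀ P ∈ Ps, s ∉ P) :
    ∃ s : ℕ → R, (∀ i, G (s i)) ∧ ∃ h : ℕ → R, ∑ i ∈ Finset.range (m + 1), h i * s i ^ 6 = 1 := by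
  classical
  have key : ∀ k : ℕ, ∃ s : ℕ → R, (∀ i, G (s i)) ∧ ∀ P : Ideal R, P.IsPrime →
      (∀ i < k, s i ∈ P) → (k : ℕ∞) ≤ P.height := by
    intro k
    induction k with
    | zero =>
      obtain ⟨s, hs, _⟩ := hG ∅ (by simp)
      exact ⟨fun _ => s, fun _ => hs, by simp⟩
    | succ k ih =>
      obtain ⟨s, hs, hk⟩ := ih
      set K : Ideal R := Ideal.span (s '' {i | i < k}) with hK
      have hfin := K.finite_minimalPrimes_of_isNoetherianRing
      obtain ⟨x, hx, hx'⟩ := hG hfin.toFinset (by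
        intro P hP; simp only [Set.Finite.mem_toFinset] at hP; exact hP.1.1)
      refine ⟨Function.update s k x, ?_, ?_⟩
      · intro i
        by_cases h : i = k
        · subst h; simpa using hx
        · simpa [h] using hs i
      · intro P hP hi
        have hKP : K ≤ P := by
          rw [hK, Ideal.span_le]
          rintro _ ⟨i, hik, rfl⟩
          have hik : i < k := hik
          have := hi i (by omega)
          rwa [Function.update_of_ne (by omega)] at this
        obtain ⟨Q, hQ, hQP⟩ := Ideal.exists_minimalPrimes_le hKP
        have hQp : Q.IsPrime := hQ.1.1
        have h1 := hk Q hQp (fun i hik => hQ.1.2 (Ideal.subset_span ⟨i, hik, rfl⟩))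
        have h2 := hx' Q (by simp [hQ])
        have h3 : Q < P := by
          refine lt_of_le_of_ne hQP ?_
          rintro rfl
          have := hi k (by omega)
          rw [Function.update_self] at this
          exact h2 this
        have h4 := Ideal.height_add_one_le_of_lt_of_isPrime h3
        push_cast
        exact (add_le_add_left h1 1).trans h4
  obtain ⟨s, hs, hk⟩ := key (m + 1)
  refine ⟨s, hs, ?_⟩
  have htop : Ideal.span ((fun i => s i ^ 6) '' (Finset.range (m + 1) : Set ℕ)) = ⊤ := by
    by_contra hne
    obtain ⟨M, hM, hle⟩ := Ideal.exists_le_maximal _ hne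
    have h1 := hk M hM.isPrime (fun i hi => hM.isPrime.mem_of_pow_mem 6
      (hle (Ideal.subset_span ⟨i, by simpa using hi, rfl⟩)))
    have h2 := h1.trans (hm M hM.isPrime)
    have : m + 1 ≤ m := by exact_mod_cast h2
    omega
  have h1 : (1 : R) ∈ Ideal.span ((fun i => s i ^ 6) '' (Finset.range (m + 1) : Set ℕ)) := by
    rw [htop]; trivial
  rw [Submodule.mem_span_image_finset_iff_exists_fun] at h1
  obtain ⟨c, hc⟩ := h1
  refine ⟨fun i => if h : i ∈ Finset.range (m + 1) then c ⟨i, h⟩ else 0, ?_⟩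
  rw [← hc, ← Finset.sum_coe_sort]
  refine Finset.sum_congr rfl fun i _ => ?_
  simp only [i.2, dif_pos, smul_eq_mul]
end
end OddRed

set_option linter.unusedSimpArgs false
set_option linter.unusedVariables false
namespace OddRed
section
variable {R : Type*} [CommRing R] {r : ℕ}

theorem batchVU (l : Fin r) (ξ : Fin r → R) (b : TV r R) (J : Finset (Fin r)) (hl : l ∉ J) :
    ∃ d, Reach J.card b d ∧ d.u = b.u ∧ d.w = b.w ∧ (∀ i ∈ J, d.v i = b.v i + ξ i * b.u l) ∧
      d.v l = b.v l - ∑ i ∈ J, ξ i * b.u i ∧ ∀ i ∉ J, i ≠ l → d.v i = b.v i := by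
  classical
  induction J using Finset.induction_on with
  | empty => exact ⟨b, Reach.refl b, by simp⟩
  | insert j J hj ih =>
    simp only [Finset.mem_insert, not_or] at hl
    have hjl : j ≠ l := fun h => hl.1 h.symm
    obtain ⟨d, h0, h1, h2, h3, h4, h5⟩ := ih hl.2
    refine ⟨_, (h0.trans (Reach.vu hjl (ξ j))).mono (by rw [Finset.card_insert_of_notMem hj]),
      h1, h2, ?_, ?_, ?_⟩
    · intro i hi
      rw [Finset.mem_insert] at hi
      have hil : i ≠ l := by rcases hi with rfl | hi; exacts [hjl, fun h => hl.2 (h ▸ hi)]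
      by_cases hij : i = j
      · subst hij; simp [h1, h5 _ hj hil, Pi.single_eq_of_ne hil]
      · simp [Pi.single_eq_of_ne hij, Pi.single_eq_of_ne hil, h3 i (hi.resolve_left hij)]
    · simp [Pi.single_eq_of_ne hjl.symm, h4, h1, Finset.sum_insert hj]; ring
    · intro i hi hil
      simp only [Finset.mem_insert, not_or] at hi
      simp [Pi.single_eq_of_ne hi.1, Pi.single_eq_of_ne hil, h5 i hi.2 hil]

theorem batchUV (l : Fin r) (ξ : Fin r → R) (b : TV r R) (J : Finset (Fin r)) (hl : l ∉ J) :
    ∃ d, Reach J.card b d ∧ d.v = b.v ∧ d.w = b.w ∧ (∀ i ∈ J, d.u i = b.u i + ξ i * b.v l) ∧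
      d.u l = b.u l - ∑ i ∈ J, ξ i * b.v i ∧ ∀ i ∉ J, i ≠ l → d.u i = b.u i := by
  classical
  induction J using Finset.induction_on with
  | empty => exact ⟨b, Reach.refl b, by simp⟩
  | insert j J hj ih =>
    simp only [Finset.mem_insert, not_or] at hl
    have hjl : j ≠ l := fun h => hl.1 h.symm
    obtain ⟨d, h0, h1, h2, h3, h4, h5⟩ := ih hl.2
    refine ⟨_, (h0.trans (Reach.uv hjl (ξ j))).mono (by rw [Finset.card_insert_of_notMem hj]),
      h1, h2, ?_, ?_, ?_⟩
    · intro i hi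
      rw [Finset.mem_insert] at hi
      have hil : i ≠ l := by rcases hi with rfl | hi; exacts [hjl, fun h => hl.2 (h ▸ hi)]
      by_cases hij : i = j
      · subst hij; simp [h1, h5 _ hj hil, Pi.single_eq_of_ne hil]
      · simp [Pi.single_eq_of_ne hij, Pi.single_eq_of_ne hil, h3 i (hi.resolve_left hij)]
    · simp [Pi.single_eq_of_ne hjl.symm, h4, h1, Finset.sum_insert hj]; ring
    · intro i hi hil
      simp only [Finset.mem_insert, not_or] at hi
      simp [Pi.single_eq_of_ne hi.1, Pi.single_eq_of_ne hil, h5 i hi.2 hil]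

/-- add multiples of `u_l` to the others -/
theorem batchUU (l : Fin r) (ξ : Fin r → R) (b : TV r R) (J : Finset (Fin r)) (hl : l ∉ J) :
    ∃ d, Reach J.card b d ∧ d.w = b.w ∧ (∀ i ∈ J, d.u i = b.u i + ξ i * b.u l) ∧
      (∀ i ∉ J, d.u i = b.u i) ∧ (∀ i, i ≠ l → d.v i = b.v i) ∧
      d.v l = b.v l - ∑ i ∈ J, ξ i * b.v i := by
  classical
  induction J using Finset.induction_on with
  | empty => exact ⟨b, Reach.refl b, by simp⟩
  | insert j J hj ih =>
    simp only [Finset.mem_insert, not_or] at hl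
    have hjl : j ≠ l := fun h => hl.1 h.symm
    obtain ⟨d, h0, h1, h2, h3, h4, h5⟩ := ih hl.2
    refine ⟨_, (h0.trans (Reach.uu hjl (ξ j))).mono (by rw [Finset.card_insert_of_notMem hj]),
      h1, ?_, ?_, ?_, ?_⟩
    · intro i hi
      rw [Finset.mem_insert] at hi
      by_cases hij : i = j
      · subst hij; simp [h3 _ hj, h3 _ hl.2]
      · simp [Pi.single_eq_of_ne hij, h2 i (hi.resolve_left hij)]
    · intro i hi
      simp only [Finset.mem_insert, not_or] at hi
      simp [Pi.single_eq_of_ne hi.1, h3 i hi.2]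
    · intro i hi
      simp [Pi.single_eq_of_ne hi, h4 i hi]
    · simp [h5, h4 j hjl, Finset.sum_insert hj]; ring

/-- add multiples of the others to `u_l` -/
theorem batchUU' (l : Fin r) (ξ : Fin r → R) (b : TV r R) (J : Finset (Fin r)) (hl : l ∉ J) :
    ∃ d, Reach J.card b d ∧ d.w = b.w ∧ d.u l = b.u l + ∑ i ∈ J, ξ i * b.u i ∧
      ∀ i, i ≠ l → d.u i = b.u i := by
  classical
  induction J using Finset.induction_on with
  | empty => exact ⟨b, Reach.refl b, by simp⟩
  | insert j J hj ih =>
    simp only [Finset.mem_insert, not_or] at hl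
    obtain ⟨d, h0, h1, h2, h3⟩ := ih hl.2
    refine ⟨_, (h0.trans (Reach.uu hl.1 (ξ j))).mono (by rw [Finset.card_insert_of_notMem hj]),
      h1, ?_, ?_⟩
    · simp [h2, h3 j (fun h => hl.1 h.symm), Finset.sum_insert hj]; ring
    · intro i hi
      simp [Pi.single_eq_of_ne hi, h3 i hi]

theorem meets (S : Submonoid R) (K : Ideal R)
    (h : ∀ P : Ideal R, P.IsPrime → Disjoint (P : Set R) S → K ≤ P → False) : ∃ σ ∈ S, σ ∈ K := by
  by_contra hcon
  push Not at hcon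
  obtain ⟨P, hP, hKP, hd⟩ := Ideal.exists_le_prime_disjoint K S (by
    rw [Set.disjoint_left]; intro x hx hx'; exact hcon x hx' hx)
  exact h P hP hd hKP

theorem lemmaG [IsNoetherianRing R] (S : Submonoid R) (D : ℕ)
    (hS : ∀ P : Ideal R, P.IsPrime → Disjoint (P : Set R) S → P.height ≤ D)
    (h3 : ∀ a, ∀ σ ∈ S, ∃ μ, a + μ * σ ∈ S) (hr : D + 2 ≤ r) (b : TV r R) (hq : b.q = 0) (hb : b.Uni)
    (f l : Fin r) (hfl : f ≠ l) :
    ∃ d, Reach (4 * (r - 1)) b d ∧ d.u f ∈ S := by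
  classical
  have hbig : ∀ P : Ideal R, P.IsPrime → Disjoint (P : Set R) S → ∀ i : Fin r,
      ¬ ((Finset.univ.erase i).card : ℕ∞) ≤ P.height := by
    intro P hP hd i h
    have h2 := h.trans (hS P hP hd)
    rw [Finset.card_erase_of_mem (Finset.mem_univ _), Finset.card_univ, Fintype.card_fin] at h2
    have h3 : r - 1 ≤ D := by exact_mod_cast h2
    omega
  have hcard : ∀ i : Fin r, (Finset.univ.erase i).card = r - 1 := by
    intro i
    rw [Finset.card_erase_of_mem (Finset.mem_univ _), Finset.card_univ, Fintype.card_fin]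
  set J : Finset (Fin r) := Finset.univ.erase l with hJ
  have hlJ : l ∉ J := by simp [hJ]
  have hmJ : ∀ i, i ≠ l → i ∈ J := by intro i hi; simp [hJ, hi]
  set I : Ideal R := Ideal.span (b.u '' J) ⊔ Ideal.span {b.v l} with hI
  have huI : ∀ i ∈ J, b.u i ∈ I := fun i hi =>
    le_sup_left (b := Ideal.span {b.v l}) (Ideal.subset_span ⟨i, hi, rfl⟩)
  have hvI : b.v l ∈ I := le_sup_right (a := Ideal.span (b.u '' J)) (Ideal.subset_span rfl)
  -- first batch
  obtain ⟨ξ, hξ⟩ := asr J b.v (b.u l) I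
  obtain ⟨b1, hR1, k1, _, k3, k4, _⟩ := batchVU l ξ b J hlJ
  have cl1 : ∃ σ ∈ S, σ ∈ I ⊔ Ideal.span (b1.v '' J) := by
    apply meets
    intro P hP hd hK
    have hIP : I ≤ P := le_sup_left.trans hK
    have hv1 : ∀ i ∈ J, b1.v i ∈ P := fun i hi =>
      hK (le_sup_right (a := I) (Ideal.subset_span ⟨i, hi, rfl⟩))
    have hul : b.u l ∈ P := by
      by_contra hul
      exact hbig P hP hd l (hξ P hP hIP hul (fun i hi => by rw [← k3 i hi]; exact hv1 i hi))
    refine hb P hP (TV.In.of_uv hq hP ?_ ?_)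
    · intro i
      by_cases hi : i = l
      · rw [hi]; exact hul
      · exact hIP (huI i (hmJ i hi))
    · intro i
      by_cases hi : i = l
      · rw [hi]; exact hIP hvI
      · have := P.sub_mem (hv1 i (hmJ i hi)) (P.mul_mem_left (ξ i) hul)
        rw [k3 i (hmJ i hi)] at this
        simpa using this
  obtain ⟨σ, hσS, hσ⟩ := cl1
  obtain ⟨z, hz, y, hy, hzy⟩ := Submodule.mem_sup.1 hσ
  obtain ⟨β, hβ⟩ : ∃ β : Fin r → R, ∑ i ∈ J, β i * b1.v i = y := by
    rw [Submodule.mem_span_image_finset_iff_exists_fun] at hy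
    obtain ⟨c, hc⟩ := hy
    refine ⟨fun i => if h : i ∈ J then c ⟨i, h⟩ else 0, ?_⟩
    rw [← hc, ← Finset.sum_coe_sort]
    refine Finset.sum_congr rfl fun i _ => ?_
    simp only [i.2, dif_pos, smul_eq_mul]
  obtain ⟨μ, hμ⟩ := h3 (b.u l) σ hσS
  obtain ⟨τ, hτ⟩ := asr J (fun i => b.u i + (-(μ * β i)) * b1.v l) (b1.v l ^ 2) ⊥
  obtain ⟨b2, hR2, m1, _, m3, m4, _⟩ := batchUV l (fun i => -(μ * β i) + τ i * b1.v l) b1 J hlJ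
  have cl2 : ∀ P : Ideal R, P.IsPrime → Disjoint (P : Set R) S → (∀ i, b2.u i ∈ P) → False := by
    intro P hP hd hu
    have hvl : b1.v l ∈ P := by
      by_contra hvl
      refine hbig P hP hd l (hτ P hP bot_le (fun h => hvl (hP.mem_of_pow_mem 2 h)) fun i hi => ?_)
      have := hu i
      rw [m3 i hi, k1] at this
      convert this using 1; ring
    have hui : ∀ i ∈ J, b.u i ∈ P := by
      intro i hi
      have := P.sub_mem (hu i) (P.mul_mem_left (-(μ * β i) + τ i * b1.v l) hvl)
      rw [m3 i hi, k1] at this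
      simpa using this
    have hIP : I ≤ P := by
      rw [hI]
      refine sup_le (Ideal.span_le.2 ?_) (Ideal.span_le.2 ?_)
      · rintro _ ⟨i, hi, rfl⟩; exact hui i hi
      · rintro _ rfl
        have := P.add_mem hvl (P.sum_mem (t := J) (f := fun i => ξ i * b.u i)
          fun i hi => P.mul_mem_left _ (hui i hi))
        rw [k4] at this
        simpa using this
    have hmem : b.u l + μ * σ ∈ P := by
      have h1 := hu l
      rw [m4, k1] at h1
      have h2 : b.u l + μ * σ = (b.u l - ∑ i ∈ J, (-(μ * β i) + τ i * b1.v l) * b1.v i) + μ * z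
          + b1.v l * ∑ i ∈ J, τ i * b1.v i := by
        have h4 : ∑ i ∈ J, (-(μ * β i) + τ i * b1.v l) * b1.v i =
            -(μ * ∑ i ∈ J, β i * b1.v i) + b1.v l * ∑ i ∈ J, τ i * b1.v i := by
          rw [Finset.mul_sum, Finset.mul_sum, ← Finset.sum_neg_distrib, ← Finset.sum_add_distrib]
          refine Finset.sum_congr rfl fun i _ => ?_
          ring
        rw [h4, hβ, ← hzy]; ring
      rw [h2]
      exact P.add_mem (P.add_mem h1 (P.mul_mem_left _ (hIP hz))) (P.mul_mem_right _ hvl)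
    exact Set.disjoint_left.1 hd hmem hμ
  -- third batch
  set J' : Finset (Fin r) := Finset.univ.erase f with hJ'
  have hfJ : f ∉ J' := by simp [hJ']
  have hmJ' : ∀ i, i ≠ f → i ∈ J' := by intro i hi; simp [hJ', hi]
  obtain ⟨ζ, hζ⟩ := asr J' b2.u (b2.u f) ⊥
  obtain ⟨b3, hR3, _, n2, n3, _⟩ := batchUU f ζ b2 J' hfJ
  have cl3 : ∃ σ ∈ S, σ ∈ Ideal.span (b3.u '' J') := by
    apply meets
    intro P hP hd hK
    have hu1 : ∀ i ∈ J', b3.u i ∈ P := fun i hi => hK (Ideal.subset_span ⟨i, hi, rfl⟩)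
    have huf : b2.u f ∈ P := by
      by_contra huf
      exact hbig P hP hd f (hζ P hP bot_le huf (fun i hi => by rw [← n2 i hi]; exact hu1 i hi))
    refine cl2 P hP hd fun i => ?_
    by_cases hi : i = f
    · rw [hi]; exact huf
    · have := P.sub_mem (hu1 i (hmJ' i hi)) (P.mul_mem_left (ζ i) huf)
      rw [n2 i (hmJ' i hi)] at this
      simpa using this
  obtain ⟨σ', hσS', hy'⟩ := cl3
  obtain ⟨β', hβ'⟩ : ∃ β : Fin r → R, ∑ i ∈ J', β i * b3.u i = σ' := by
    rw [Submodule.mem_span_image_finset_iff_exists_fun] at hy'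
    obtain ⟨c, hc⟩ := hy'
    refine ⟨fun i => if h : i ∈ J' then c ⟨i, h⟩ else 0, ?_⟩
    rw [← hc, ← Finset.sum_coe_sort]
    refine Finset.sum_congr rfl fun i _ => ?_
    simp only [i.2, dif_pos, smul_eq_mul]
  obtain ⟨μ', hμ'⟩ := h3 (b3.u f) σ' hσS'
  obtain ⟨b4, hR4, _, o2, _⟩ := batchUU' f (fun i => μ' * β' i) b3 J' hfJ
  refine ⟨b4, ((hR1.trans hR2).trans hR3 |>.trans hR4).mono ?_, ?_⟩
  · rw [hJ, hJ', hcard, hcard]; omega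
  · rw [o2]
    convert hμ' using 2
    rw [← hβ', Finset.mul_sum]
    exact Finset.sum_congr rfl fun i _ => by ring
end
end OddRed

set_option linter.unusedSimpArgs false
set_option linter.unusedVariables false
namespace OddRed
section
open Polynomial
variable {B : Type*} [CommRing B]

theorem no_chain (P0 P1 P2 : Ideal B[X]) (h0 : P0.IsPrime) (h1 : P1.IsPrime) (h2 : P2.IsPrime)
    (h01 : P0 < P1) (h12 : P1 < P2) (hc : P0.comap C = P2.comap C) : False := by
  have e1 : P1.comap C = P0.comap C :=
    le_antisymm ((Ideal.comap_mono h12.le).trans hc.ge) (Ideal.comap_mono h01.le)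
  let p : PrimeSpectrum B := ⟨P0.comap C, h0.comap C⟩
  have hk : Order.krullDim (PrimeSpectrum.comap (C : B →+* B[X]) ⁻¹' {p}) ≤ 1 := by
    rw [show C = (algebraMap B (Polynomial B)) from rfl, Order.krullDim_eq_of_orderIso
      (PrimeSpectrum.preimageOrderIsoFiber B (Polynomial B) p), ← ringKrullDim,
      ← ringKrullDim_eq_of_ringEquiv (polyEquivTensor B (p.asIdeal.ResidueField)).toRingEquiv]
    have : Ring.KrullDimLE 1 (p.asIdeal.ResidueField)[X] := inferInstance
    exact Ring.krullDimLE_iff.1 this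
  rw [Order.krullDim_le_one_iff] at hk
  have m0 : (⟨P0, h0⟩ : PrimeSpectrum B[X]) ∈ PrimeSpectrum.comap (C : B →+* B[X]) ⁻¹' {p} := rfl
  have m1 : (⟨P1, h1⟩ : PrimeSpectrum B[X]) ∈ PrimeSpectrum.comap (C : B →+* B[X]) ⁻¹' {p} :=
    PrimeSpectrum.ext e1
  have m2 : (⟨P2, h2⟩ : PrimeSpectrum B[X]) ∈ PrimeSpectrum.comap (C : B →+* B[X]) ⁻¹' {p} :=
    PrimeSpectrum.ext hc.symm
  rcases hk ⟨_, m1⟩ with h | h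
  · have := h (b := ⟨_, m0⟩) h01.le
    exact absurd (show P1 ≤ P0 from this) (not_le_of_gt h01)
  · have := h (b := ⟨_, m2⟩) h12.le
    exact absurd (show P2 ≤ P1 from this) (not_le_of_gt h12)

theorem height_poly_le_of_le [IsNoetherianRing B] (P : Ideal B[X]) (hP : P.IsPrime)
    (h : P ≤ (P.comap C).map C) : P.height ≤ (P.comap C).height := by
  have hp : (P.comap C).IsPrime := hP.comap C
  have hlo : P.LiesOver (P.comap C) := ⟨rfl⟩
  have heq : P = (P.comap C).map C := le_antisymm h Ideal.map_comap_le
  have h1 := Ideal.height_le_height_add_of_liesOver (P.comap C) P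
  have h2 : P.map (Ideal.Quotient.mk <| (P.comap C).map (algebraMap B B[X])) = ⊥ := by
    rw [Ideal.map_eq_bot_iff_le_ker, Ideal.mk_ker]; exact h
  have hpr : ((P.comap C).map (algebraMap B B[X])).IsPrime := by
    rw [show algebraMap B B[X] = C from rfl, ← heq]; exact hP
  rw [h2, Ideal.height_bot, add_zero] at h1
  exact h1

theorem height_poly_le [IsNoetherianRing B] (P : Ideal B[X]) (hP : P.IsPrime) :
    P.height ≤ (P.comap C).height + 1 := by
  have hp : (P.comap C).IsPrime := hP.comap C
  have hlo : P.LiesOver (P.comap C) := ⟨rfl⟩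
  have h1 := Ideal.height_le_height_add_of_liesOver (P.comap C) P
  refine h1.trans ?_
  gcongr
  have hpr : ((P.comap C).map (algebraMap B B[X])).IsPrime :=
    Ideal.isPrime_map_C_of_isPrime
  have hle : (P.comap C).map (algebraMap B B[X]) ≤ P := Ideal.map_comap_le
  set mk := Ideal.Quotient.mk ((P.comap C).map (algebraMap B B[X])) with hmk
  have hPm : (P.map mk).IsPrime := by
    apply Ideal.map_isPrime_of_surjective Ideal.Quotient.mk_surjective
    rw [Ideal.mk_ker]; exact hle
  have hcm : (P.map mk).comap mk = P := by
    rw [Ideal.comap_map_of_surjective _ Ideal.Quotient.mk_surjective, ← RingHom.ker_eq_comap_bot,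
      Ideal.mk_ker]
    exact sup_eq_left.2 hle
  have := (Ideal.height_le_iff (p := P.map mk) (n := 1)).2 ?_
  · exact_mod_cast this
  intro q hq hqP
  have hq0 : q = ⊥ := by
    by_contra hq0
    refine no_chain ((P.comap C).map (algebraMap B B[X])) (q.comap mk) P hpr (hq.comap _) hP ?_ ?_ ?_
    · refine lt_of_le_of_ne ?_ ?_
      · conv_lhs => rw [← Ideal.mk_ker (I := (P.comap C).map (algebraMap B B[X]))]
        exact Ideal.comap_mono bot_le
      · intro h
        apply hq0
        rw [← Ideal.map_comap_of_surjective mk Ideal.Quotient.mk_surjective q, ← h,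
          Ideal.map_eq_bot_iff_le_ker, Ideal.mk_ker]
    · refine lt_of_le_of_ne ?_ ?_
      · conv_rhs => rw [← hcm]
        exact Ideal.comap_mono hqP.le
      · intro h
        apply hqP.ne
        rw [← Ideal.map_comap_of_surjective mk Ideal.Quotient.mk_surjective q, h]
    · refine le_antisymm (Ideal.comap_mono hle) ?_
      exact Ideal.le_comap_map
  rw [hq0, Ideal.height_bot]
  simp
end
end OddRed

set_option linter.unusedSimpArgs false
set_option linter.unusedVariables false
namespace OddRed
section
open Polynomial

/-- A submonoid adapted to contracting the polynomial variables. -/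
def Good {C₀ A : Type*} [CommRing C₀] [CommRing A] (ι : C₀ →+* A) (D : ℕ) : Prop :=
  ∃ S : Submonoid A, (∀ P : Ideal A, P.IsPrime → Disjoint (P : Set A) S → P.height ≤ D) ∧
    (∀ a, ∀ σ ∈ S, ∃ μ, a + μ * σ ∈ S) ∧
    ∀ f ∈ S, ∃ (Γ : A →+* A[X]) (ε : A →+* C₀), (Γ f).Monic ∧ (∀ x, (Γ x).eval 1 = x) ∧
      ∀ x, (Γ x).eval 0 = ι (ε x)

theorem Good.base {C₀ : Type*} [CommRing C₀] {D : ℕ} (hD : ringKrullDim C₀ = (D : WithBot ℕ∞)) :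
    Good (RingHom.id C₀) D := by
  refine ⟨⊥, ?_, ?_, ?_⟩
  · intro P hP _
    have := Ideal.height_le_ringKrullDim_of_isPrime (I := P)
    rw [hD] at this
    exact_mod_cast this
  · intro a σ hσ
    rw [Submonoid.mem_bot] at hσ
    exact ⟨1 - a, by rw [hσ, Submonoid.mem_bot]; ring⟩
  · intro f hf
    rw [Submonoid.mem_bot] at hf
    exact ⟨C, RingHom.id _, by rw [hf, C_1]; exact monic_one, by simp, by simp⟩

theorem Good.equiv {C₀ A B : Type*} [CommRing C₀] [CommRing A] [CommRing B] {ι : C₀ →+* A} {D : ℕ}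
    (h : Good ι D) (e : A ≃+* B) : Good ((e : A →+* B).comp ι) D := by
  obtain ⟨S, h1, h2, h3⟩ := h
  refine ⟨S.comap (e.symm : B →+* A), ?_, ?_, ?_⟩
  · intro P hP hd
    rw [← e.height_comap P]
    refine h1 _ (hP.comap e) ?_
    rw [Set.disjoint_left] at hd ⊢
    intro x hx hx'
    refine hd (a := e x) hx ?_
    simpa using hx'
  · intro a σ hσ
    obtain ⟨μ, hμ⟩ := h2 (e.symm a) (e.symm σ) hσ
    refine ⟨e μ, ?_⟩
    rw [Submonoid.mem_comap]
    simpa using hμ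
  · intro f hf
    obtain ⟨Γ, ε, k1, k2, k3⟩ := h3 (e.symm f) hf
    refine ⟨((mapRingHom (e : A →+* B)).comp Γ).comp (e.symm : B →+* A), ε.comp (e.symm : B →+* A),
      ?_, ?_, ?_⟩
    · exact k1.map _
    · intro x
      have := congrArg e (k2 (e.symm x))
      simp only [RingHom.comp_apply, coe_mapRingHom]
      rw [show (1 : B) = (e : A →+* B) 1 by simp, eval_map_apply]
      simpa using this
    · intro x
      have := congrArg e (k3 (e.symm x))
      simp only [RingHom.comp_apply, coe_mapRingHom]
      rw [show (0 : B) = (e : A →+* B) 0 by simp, eval_map_apply]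
      simpa using this

theorem exists_lead {B : Type*} [CommRing B] (P : Ideal B[X]) (n : ℕ) : ∀ f ∈ P,
    f.support.card ≤ n → (∃ i, f.coeff i ∉ P.comap C) → ∃ g ∈ P, g.leadingCoeff ∉ P.comap C := by
  induction n with
  | zero =>
    intro f hf hc ⟨i, hi⟩
    have : f = 0 := by simpa using hc
    exact absurd (by simp [this]) hi
  | succ n ih =>
    intro f hf hc ⟨i, hi⟩
    by_cases hl : f.leadingCoeff ∈ P.comap C
    · have hf0 : f ≠ 0 := by rintro rfl; exact hi (by simp)
      refine ih f.eraseLead ?_ ?_ ⟨i, ?_⟩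
      · have h := f.eraseLead_add_C_mul_X_pow
        have : f.eraseLead = f - C f.leadingCoeff * X ^ f.natDegree := by
          linear_combination h
        rw [this]
        exact P.sub_mem hf (P.mul_mem_right _ hl)
      · have := eraseLead_support_card_lt hf0
        omega
      · rw [eraseLead_coeff_of_ne]
        · exact hi
        · rintro rfl; exact hi hl
    · exact ⟨f, hf, hl⟩

theorem Good.poly {C₀ B : Type*} [CommRing C₀] [CommRing B] [IsNoetherianRing B] {ι : C₀ →+* B} {D : ℕ}
    (h : Good ι D) : Good ((C : B →+* B[X]).comp ι) D := by
  classical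
  obtain ⟨S, h1, h2, h3⟩ := h
  let S' : Submonoid B[X] :=
    { carrier := {f | ∃ d, f.natDegree ≤ d ∧ f.coeff d ∈ S}
      one_mem' := ⟨0, by simp, by simp [S.one_mem]⟩
      mul_mem' := by
        rintro f g ⟨d, hd, hd'⟩ ⟨e, he, he'⟩
        refine ⟨d + e, natDegree_mul_le_of_le hd he, ?_⟩
        rw [coeff_mul_add_eq_of_natDegree_le hd he]
        exact S.mul_mem hd' he' }
  refine ⟨S', ?_, ?_, ?_⟩
  · intro P hP hd
    rw [Set.disjoint_left] at hd
    have hp : (P.comap C).IsPrime := hP.comap C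
    have hpd : Disjoint ((P.comap C : Ideal B) : Set B) S := by
      rw [Set.disjoint_left]
      intro x hx hx'
      exact hd (a := C x) hx ⟨0, by simp, by simpa using hx'⟩
    by_cases hle : P ≤ (P.comap C).map C
    · exact (height_poly_le_of_le P hP hle).trans (h1 _ hp hpd)
    · obtain ⟨f, hf, hf'⟩ := SetLike.not_le_iff_exists.1 hle
      rw [Ideal.mem_map_C_iff] at hf'
      push Not at hf'
      obtain ⟨g, hg, hg'⟩ := exists_lead P _ f hf le_rfl hf'
      set a := g.leadingCoeff with ha
      refine (height_poly_le P hP).trans ?_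
      by_cases hm : ∃ σ ∈ S, σ ∈ P.comap C ⊔ Ideal.span {a}
      · exfalso
        obtain ⟨σ, hσ, hσ'⟩ := hm
        obtain ⟨z, hz, y, hy, hzy⟩ := Submodule.mem_sup.1 hσ'
        obtain ⟨c, rfl⟩ := Ideal.mem_span_singleton'.1 hy
        refine hd (a := C c * g + C z * X ^ g.natDegree) ?_ ⟨g.natDegree, ?_, ?_⟩
        · exact P.add_mem (P.mul_mem_left _ hg) (P.mul_mem_right _ hz)
        · exact natDegree_add_le_of_degree_le (natDegree_C_mul_le _ _) (natDegree_C_mul_X_pow_le _ _)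
        · have : (C c * g + C z * X ^ g.natDegree).coeff g.natDegree = σ := by
            simp only [coeff_add, coeff_C_mul, coeff_X_pow, if_true, mul_one]
            rw [← hzy, ha, leadingCoeff]; ring
          rw [this]; exact hσ
      · push Not at hm
        obtain ⟨Q, hQ, hKQ, hdQ⟩ := Ideal.exists_le_prime_disjoint (P.comap C ⊔ Ideal.span {a}) S (by
          rw [Set.disjoint_left]; intro x hx hx'; exact hm x hx' hx)
        have hlt : P.comap C < Q := by
          refine lt_of_le_of_ne (le_sup_left.trans hKQ) ?_
          intro heq
          apply hg'
          rw [heq]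
          exact hKQ (le_sup_right (a := P.comap C) (Ideal.mem_span_singleton_self a))
        exact (Ideal.height_add_one_le_of_lt_of_isPrime hlt).trans (h1 Q hQ hdQ)
  · rintro a σ ⟨d, hd, hd'⟩
    refine ⟨X ^ (a.natDegree + 1), a.natDegree + 1 + d, ?_, ?_⟩
    · refine natDegree_add_le_of_degree_le (by omega) ?_
      exact natDegree_mul_le_of_le (natDegree_X_pow_le _) hd
    · rw [coeff_add, coeff_eq_zero_of_natDegree_lt (by omega), zero_add, add_comm _ d, coeff_X_pow_mul]
      exact hd'
  · rintro f ⟨d, hd, hd'⟩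
    obtain ⟨Γ, ε, k1, k2, k3⟩ := h3 _ hd'
    set G : B →+* B[X][X] := (mapRingHom C).comp Γ with hG
    obtain ⟨N, hN⟩ : ∃ N, ∀ i ∈ Finset.range d, (G (f.coeff i)).natDegree ≤ N :=
      ⟨(Finset.range d).sup fun i => (G (f.coeff i)).natDegree, fun i hi =>
        Finset.le_sup (f := fun i => (G (f.coeff i)).natDegree) hi⟩
    set z : B[X][X] := X ^ (N + 2) + (C X * X - X ^ (N + 1)) with hz
    have hzdeg : ((C (X : B[X]) * X - X ^ (N + 1) : B[X][X])).natDegree ≤ N + 1 := by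
      refine (natDegree_sub_le _ _).trans (max_le ?_ (natDegree_X_pow_le (R := B[X]) _))
      exact (natDegree_C_mul_le _ (X : B[X][X])).trans (natDegree_X_le.trans (Nat.le_add_left 1 N))
    have hzm : z.Monic := by
      apply monic_X_pow_add
      refine lt_of_le_of_lt degree_le_natDegree ?_
      have hlt := Nat.lt_of_le_of_lt hzdeg (Nat.lt_succ_self (N + 1))
      exact_mod_cast hlt
    refine ⟨eval₂RingHom G z, ε.comp (evalRingHom 0), ?_, ?_, ?_⟩
    · rw [coe_eval₂RingHom, eval₂_eq_sum_range' G (show f.natDegree < d + 1 by omega),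
        Finset.sum_range_succ, add_comm]
      nontriviality B
      have hznd : z.natDegree = N + 2 := by
        rw [hz, natDegree_add_eq_left_of_natDegree_lt]
        · simp
        · simp only [natDegree_X_pow]; omega
      have hm : (G (f.coeff d) * z ^ d).Monic := (k1.map C).mul (hzm.pow d)
      refine hm.add_of_left ?_
      have e1 : (∑ i ∈ Finset.range d, G (f.coeff i) * z ^ i) ∈ degreeLT B[X] (d * (N + 2)) := by
        refine Submodule.sum_mem _ fun i hi => ?_
        rw [mem_degreeLT]
        have hi' := Finset.mem_range.1 hi
        have : (G (f.coeff i) * z ^ i).natDegree < d * (N + 2) := by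
          calc (G (f.coeff i) * z ^ i).natDegree ≤ N + i * (N + 2) :=
                natDegree_mul_le_of_le (hN i hi) (natDegree_pow_le_of_le i hznd.le)
            _ < (i + 1) * (N + 2) := by rw [add_mul]; omega
            _ ≤ d * (N + 2) := Nat.mul_le_mul_right _ hi'
        exact lt_of_le_of_lt degree_le_natDegree (by exact_mod_cast this)
      rw [mem_degreeLT] at e1
      refine lt_of_lt_of_le e1 ?_
      have hGm : (G (f.coeff d)).Monic := k1.map C
      rw [degree_eq_natDegree hm.ne_zero, hGm.natDegree_mul (hzm.pow d), hzm.natDegree_pow, hznd]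
      exact_mod_cast Nat.le_add_left _ _
    · have : (evalRingHom (1 : B[X])).comp (eval₂RingHom G z) = RingHom.id _ := by
        apply Polynomial.ringHom_ext
        · intro b
          have := congrArg (C : B →+* B[X]) (k2 b)
          simp only [RingHom.comp_apply, coe_eval₂RingHom, eval₂_C, hG, coe_mapRingHom, coe_evalRingHom]
          rw [show (1 : B[X]) = C 1 by simp, eval_map_apply, this]; rfl
        · simp [hz]
      intro x
      exact DFunLike.congr_fun this x
    · have : (evalRingHom (0 : B[X])).comp (eval₂RingHom G z) =
          (C.comp ι).comp (ε.comp (evalRingHom 0)) := by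
        apply Polynomial.ringHom_ext
        · intro b
          have := congrArg (C : B →+* B[X]) (k3 b)
          simp only [RingHom.comp_apply, coe_eval₂RingHom, eval₂_C, hG, coe_mapRingHom, coe_evalRingHom,
            eval_C]
          rw [show (0 : B[X]) = C 0 by simp, eval_map_apply, this]
        · simp [hz]
      intro x
      exact DFunLike.congr_fun this x

theorem good_mv (C₀ : Type*) [CommRing C₀] [IsNoetherianRing C₀] {D : ℕ}
    (hD : ringKrullDim C₀ = (D : WithBot ℕ∞)) (n : ℕ) :
    ∃ ι : C₀ →+* MvPolynomial (Fin n) C₀, Good ι D := by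
  induction n with
  | zero => exact ⟨_, (Good.base hD).equiv (MvPolynomial.isEmptyRingEquiv C₀ (Fin 0)).symm⟩
  | succ n ih =>
    obtain ⟨ι, hι⟩ := ih
    exact ⟨_, hι.poly.equiv (MvPolynomial.finSuccEquiv C₀ n).symm.toRingEquiv⟩
end
end OddRed

set_option linter.unusedSimpArgs false
set_option linter.unusedVariables false
namespace OddRed
section
variable {R : Type*} [CommRing R] {r : ℕ}

/-- avoidance with data depending on the prime -/
theorem avoidD (Ps : Finset (Ideal R)) (hp : ∀ P ∈ Ps, P.IsPrime) (a y : Ideal R → R)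
    (h : ∀ P ∈ Ps, a P ∉ P ∨ y P ∉ P) : ∃ ξ : R, ∀ P ∈ Ps, a P + ξ * y P ∉ P := by
  classical
  induction hn : Ps.card generalizing Ps with
  | zero =>
    rw [Finset.card_eq_zero] at hn
    subst hn
    exact ⟨0, by simp⟩
  | succ n ih =>
    obtain ⟨Q, hQ⟩ := Ps.exists_minimal (Finset.card_pos.1 (by omega))
    have hQm := hQ.1
    obtain ⟨ξ, hξ⟩ := ih (Ps.erase Q) (fun P hP => hp P (Finset.mem_of_mem_erase hP))
      (fun P hP => h P (Finset.mem_of_mem_erase hP)) (by rw [Finset.card_erase_of_mem hQm]; omega)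
    by_cases hk : a Q + ξ * y Q ∈ Q
    · have hQp := hp Q hQm
      have hk' : y Q ∉ Q := by
        intro hcon
        rcases h Q hQm with h1 | h1
        · apply h1
          have := Q.sub_mem hk (Q.mul_mem_left ξ hcon)
          simpa using this
        · exact h1 hcon
      obtain ⟨e, he1, he2⟩ : ∃ e, e ∈ (Ps.erase Q).inf id ∧ e ∉ Q := by
        have : ¬ (Ps.erase Q).inf id ≤ Q := by
          rw [hQp.inf_le']
          rintro ⟨P, hP, hPQ⟩
          rw [Finset.mem_erase] at hP
          exact hP.1 (le_antisymm hPQ (hQ.2 hP.2 hPQ))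
        exact SetLike.not_le_iff_exists.1 this
      refine ⟨ξ + e, fun P hP => ?_⟩
      by_cases hPQ : P = Q
      · rw [hPQ]
        intro hh
        have h2 := Q.sub_mem hh hk
        have h3 : e * y Q ∈ Q := by
          convert h2 using 1; ring
        exact (hQp.mem_or_mem h3).elim he2 hk'
      · have hP' := Finset.mem_erase.2 ⟨hPQ, hP⟩
        intro hh
        refine hξ P hP' ?_
        have heP : e ∈ P := (Finset.inf_le hP' : (Ps.erase Q).inf id ≤ id P) he1
        have h2 := P.sub_mem hh (P.mul_mem_right (y P) heP)
        convert h2 using 1; ring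
    · refine ⟨ξ, fun P hP => ?_⟩
      by_cases hPQ : P = Q
      · rw [hPQ]; exact hk
      · exact hξ P (Finset.mem_erase.2 ⟨hPQ, hP⟩)

/-- avoidance with data depending on the prime, only where possible -/
theorem avoidD' (Ps : Finset (Ideal R)) (hp : ∀ P ∈ Ps, P.IsPrime) (a y : Ideal R → R) :
    ∃ ξ : R, ∀ P ∈ Ps, (a P ∉ P ∨ y P ∉ P) → a P + ξ * y P ∉ P := by
  classical
  obtain ⟨ξ, h⟩ := avoidD (Ps.filter fun P => a P ∉ P ∨ y P ∉ P)
    (fun P hP => hp P (Finset.mem_filter.1 hP).1) a y (fun P hP => (Finset.mem_filter.1 hP).2)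
  exact ⟨ξ, fun P hP h' => h P (Finset.mem_filter.2 ⟨hP, h'⟩)⟩

theorem spread_aux (Ps : Finset (Ideal R)) (hp : ∀ P ∈ Ps, P.IsPrime) (d c : Fin r) (hdc : d ≠ c)
    (J : Finset (Fin r)) (hd : d ∉ J) (hc : c ∉ J) (b : TV r R)
    (h : ∀ P ∈ Ps, b.u d ∉ P ∨ ∃ j ∈ J, b.u j ∉ P ∨ b.v j ∉ P) :
    ∃ b', Reach (2 * J.card) b b' ∧ b'.u c = b.u c ∧ ∀ P ∈ Ps, b'.u d ∉ P := by
  classical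
  induction J using Finset.induction_on generalizing b with
  | empty =>
    refine ⟨b, (Reach.refl b).mono (by simp), rfl, fun P hP => ?_⟩
    simpa using h P hP
  | insert j J hj ih =>
    simp only [Finset.mem_insert, not_or] at hd hc
    have hdj := hd.1
    obtain ⟨ξ, hξ⟩ := avoidD' Ps hp
      (fun P => if b.u d ∉ P ∨ b.u j ∉ P then b.u d else b.v j)
      (fun P => if b.u d ∉ P ∨ b.u j ∉ P then b.u j else -b.v d)
    have h1 := Reach.uu (b := b) hdj ξ
    set b1 : TV r R := ⟨b.u + Pi.single d (ξ * b.u j), b.w, b.v - Pi.single j (ξ * b.v d)⟩ with hb1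
    have e1 : b1.u d = b.u d + ξ * b.u j := by simp [hb1]
    have e2 : b1.v j = b.v j - ξ * b.v d := by simp [hb1]
    have e3 : ∀ i, i ≠ d → b1.u i = b.u i := by intro i hi; simp [hb1, Pi.single_eq_of_ne hi]
    have e4 : ∀ i, i ≠ j → b1.v i = b.v i := by intro i hi; simp [hb1, Pi.single_eq_of_ne hi]
    obtain ⟨μ, hμ⟩ := avoidD' Ps hp (fun P => b1.u d) (fun P => b1.v j)
    have h2 := Reach.uv (b := b1) hdj μ
    set b2 : TV r R := ⟨b1.u + Pi.single d (μ * b1.v j) - Pi.single j (μ * b1.v d), b1.w, b1.v⟩ with hb2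
    have f1 : b2.u d = b1.u d + μ * b1.v j := by simp [hb2, hdj]
    have f3 : ∀ i, i ≠ d → i ≠ j → b2.u i = b1.u i := by
      intro i hi hi'; simp [hb2, Pi.single_eq_of_ne hi, Pi.single_eq_of_ne hi']
    have f4 : b2.v = b1.v := rfl
    obtain ⟨b', k1, k2, k3⟩ := ih hd.2 hc.2 b2 (by
      intro P hP
      by_cases g1 : b1.u d ∉ P ∨ b1.v j ∉ P
      · left; rw [f1]; exact hμ P hP g1
      · right
        push Not at g1
        have hx := hξ P hP
        by_cases g2 : b.u d ∉ P ∨ b.u j ∉ P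
        · simp only [if_pos g2] at hx
          exact absurd (by rw [← e1]; exact g1.1) (hx g2)
        · simp only [if_neg g2] at hx
          by_cases g3 : b.v j ∉ P
          · exact absurd (by rw [mul_neg, ← sub_eq_add_neg, ← e2]; exact g1.2) (hx (Or.inl g3))
          · push Not at g2 g3
            rcases h P hP with h' | ⟨i, hi, hi'⟩
            · exact absurd g2.1 h'
            · rcases Finset.mem_insert.1 hi with rfl | hiJ
              · rcases hi' with h' | h'
                · exact absurd g2.2 h'
                · exact absurd g3 h'
              · have n1 : i ≠ j := by rintro rfl; exact hj hiJ
                have n2 : i ≠ d := by rintro rfl; exact hd.2 hiJ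
                refine ⟨i, hiJ, ?_⟩
                rw [f4, e4 i n1, f3 i n2 n1, e3 i n2]
                exact hi')
    refine ⟨b', ((h1.trans h2).trans k1).mono (by rw [Finset.card_insert_of_notMem hj]; omega), ?_, k3⟩
    rw [k2, f3 c (Ne.symm hdc) hc.1, e3 c (Ne.symm hdc)]

theorem spread (Ps : Finset (Ideal R)) (hp : ∀ P ∈ Ps, P.IsPrime) (a d c : Fin r) (had : a ≠ d)
    (hac : a ≠ c) (hdc : d ≠ c) (b : TV r R)
    (h : ∀ P ∈ Ps, ∃ j, j ≠ c ∧ (b.u j ∉ P ∨ b.v j ∉ P)) :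
    ∃ b', Reach (2 * (r - 3) + 2) b b' ∧ b'.u c = b.u c ∧ ∀ P ∈ Ps, b'.u d ∉ P := by
  classical
  obtain ⟨ξ, hξ⟩ := avoidD' Ps hp
    (fun P => if b.u a ∉ P ∨ b.v d ∉ P then b.u a else b.u d)
    (fun P => if b.u a ∉ P ∨ b.v d ∉ P then b.v d else -b.v a)
  have h1 := Reach.uv (b := b) had ξ
  set b1 : TV r R := ⟨b.u + Pi.single a (ξ * b.v d) - Pi.single d (ξ * b.v a), b.w, b.v⟩ with hb1
  have e1 : b1.u a = b.u a + ξ * b.v d := by simp [hb1, had]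
  have e2 : b1.u d = b.u d - ξ * b.v a := by simp [hb1, had, Pi.single_eq_of_ne had.symm]
  have e3 : ∀ i, i ≠ a → i ≠ d → b1.u i = b.u i := by
    intro i hi hi'; simp [hb1, Pi.single_eq_of_ne hi, Pi.single_eq_of_ne hi']
  have e4 : b1.v = b.v := rfl
  obtain ⟨μ, hμ⟩ := avoidD' Ps hp (fun P => b1.u d) (fun P => b1.u a)
  have h2 := Reach.uu (b := b1) had.symm μ
  set b2 : TV r R := ⟨b1.u + Pi.single d (μ * b1.u a), b1.w, b1.v - Pi.single a (μ * b1.v d)⟩ with hb2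
  have f1 : b2.u d = b1.u d + μ * b1.u a := by simp [hb2]
  have f3 : ∀ i, i ≠ d → b2.u i = b1.u i := by intro i hi; simp [hb2, Pi.single_eq_of_ne hi]
  have f4 : ∀ i, i ≠ a → b2.v i = b1.v i := by intro i hi; simp [hb2, Pi.single_eq_of_ne hi]
  have hcard : (Finset.univ \ {a, d, c} : Finset (Fin r)).card = r - 3 := by
    rw [Finset.card_sdiff_of_subset (Finset.subset_univ _), Finset.card_univ, Fintype.card_fin]
    congr 1
    rw [Finset.card_insert_of_notMem (by simp [had, hac]), Finset.card_insert_of_notMem (by simp [hdc]),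
      Finset.card_singleton]
  obtain ⟨b', k1, k2, k3⟩ := spread_aux Ps hp d c hdc (Finset.univ \ {a, d, c}) (by simp) (by simp) b2 (by
    intro P hP
    by_cases g1 : b1.u d ∉ P ∨ b1.u a ∉ P
    · left; rw [f1]; exact hμ P hP g1
    · right
      push Not at g1
      have hx := hξ P hP
      by_cases g2 : b.u a ∉ P ∨ b.v d ∉ P
      · simp only [if_pos g2] at hx
        exact absurd (by rw [← e1]; exact g1.2) (hx g2)
      · simp only [if_neg g2] at hx
        by_cases g3 : b.u d ∉ P ∨ b.v a ∉ P
        · refine absurd (by rw [mul_neg, ← sub_eq_add_neg, ← e2]; exact g1.1) (hx ?_)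
          simpa using g3
        · push Not at g2 g3
          obtain ⟨j, hjc, hj⟩ := h P hP
          have n1 : j ≠ a := by
            rintro rfl
            rcases hj with h' | h'
            · exact h' g2.1
            · exact h' g3.2
          have n2 : j ≠ d := by
            rintro rfl
            rcases hj with h' | h'
            · exact h' g3.1
            · exact h' g2.2
          refine ⟨j, by simp [n1, n2, hjc], ?_⟩
          rw [f4 j n1, f3 j n2, e3 j n1 n2, e4]
          exact hj)
  rw [hcard] at k1
  refine ⟨b', ((h1.trans h2).trans k1).mono (by omega), ?_, k3⟩
  rw [k2, f3 c hdc.symm, e3 c hac.symm hdc.symm]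
end
end OddRed

set_option linter.unusedSimpArgs false
set_option linter.unusedVariables false
namespace OddRed
section
open Polynomial
variable {A : Type*} [CommRing A] {r : ℕ}

/-- primes containing a monic polynomial above finitely many primes are finite in number -/
theorem fin_over [IsNoetherianRing A] (f : A[X]) (hf : f.Monic) (Ps : Finset (Ideal A)) :
    {Q : Ideal A[X] | Q.IsPrime ∧ f ∈ Q ∧ Q.comap (C : A →+* A[X]) ∈ Ps}.Finite := by
  refine Set.Finite.subset (Set.Finite.biUnion Ps.finite_toSet
    (fun p _ => Ideal.finite_minimalPrimes_of_isNoetherianRing A[X] (p.map C ⊔ Ideal.span {f}))) ?_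
  rintro Q ⟨hQ, hfQ, hQP⟩
  refine Set.mem_biUnion hQP ?_
  refine ⟨⟨hQ, sup_le (Ideal.map_le_iff_le_comap.2 le_rfl) ((Ideal.span_singleton_le_iff_mem _).2 hfQ)⟩, ?_⟩
  rintro Q' ⟨hQ', hle⟩ hQQ
  by_contra hcon
  obtain ⟨x, hx, hx'⟩ := SetLike.not_le_iff_exists.1 hcon
  have hfQ' : f ∈ Q' := hle (le_sup_right (a := Ideal.map C (Q.comap C))
    (Ideal.mem_span_singleton_self f))
  obtain ⟨p, hpm, hp⟩ := hf.quotient_isIntegral hfQ' (Ideal.Quotient.mk Q' x)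
  have hp' : eval₂ (C : A →+* A[X]) x p ∈ Q' := by
    rw [← Ideal.Quotient.eq_zero_iff_mem, ← hp, hom_eval₂]
    rfl
  have hprime : (Q'.comap (C : A →+* A[X])).IsPrime := hQ'.comap C
  have := Ideal.comap_lt_comap_of_root_mem_sdiff (f := (C : A →+* A[X])) hQQ ⟨hx, hx'⟩ (p := p)
    (hpm.map _).ne_zero hp'
  refine absurd this (not_lt_of_ge ?_)
  exact Ideal.map_le_iff_le_comap.1 (le_sup_left.trans hle)

/-- lying over -/
theorem not_le_of_over (f g : A[X]) (hf : f.Monic) (p : Ideal A) (hp : p.IsPrime)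
    (h : ∀ Q : Ideal A[X], Q.IsPrime → f ∈ Q → Q.comap (C : A →+* A[X]) = p → g ∉ Q) :
    ¬ (Ideal.span {f, g}).comap (C : A →+* A[X]) ≤ p := by
  intro hle
  have : Module.Finite A (AdjoinRoot f) := hf.finite_adjoinRoot
  obtain ⟨Q, hQ, hQp, hQc⟩ := Ideal.exists_ideal_over_prime_of_isIntegral (S := AdjoinRoot f) p
    (Ideal.span {AdjoinRoot.mk f g}) (by
      intro x hx
      apply hle
      rw [Ideal.mem_comap, Ideal.mem_span_pair]
      rw [Ideal.mem_comap, Ideal.mem_span_singleton'] at hx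
      obtain ⟨y, hy⟩ := hx
      obtain ⟨y, rfl⟩ := AdjoinRoot.mk_surjective y
      rw [AdjoinRoot.algebraMap_eq, ← AdjoinRoot.mk_C, ← map_mul, AdjoinRoot.mk_eq_mk] at hy
      obtain ⟨z, hz⟩ := hy
      exact ⟨-z, y, by linear_combination hz⟩)
  refine h (Q.comap (AdjoinRoot.mk f)) (hQp.comap _) ?_ ?_ ?_
  · rw [Ideal.mem_comap, AdjoinRoot.mk_self]; exact Q.zero_mem
  · rw [← hQc, AdjoinRoot.algebraMap_eq, Ideal.comap_comap]; rfl
  · exact hQ (Ideal.mem_span_singleton_self _)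

theorem SS [IsNoetherianRing A] (b : TV r A[X]) (hq : b.q = 0) (hb : b.Uni) (a d c : Fin r)
    (had : a ≠ d) (hac : a ≠ c) (hdc : d ≠ c) (hm : (b.u a).Monic)
    (Ps : Finset (Ideal A)) (hPs : ∀ P ∈ Ps, P.IsPrime) :
    ∃ s : A, (∀ t0 t1, s ^ 6 ∣ t1 - t0 →
      Reach (8 * r + 4) (b.map (evalRingHom t0)) (b.map (evalRingHom t1))) ∧ ∀ P ∈ Ps, s ∉ P := by
  classical
  have hr : 3 ≤ r := by
    have := Finset.card_le_univ ({a, d, c} : Finset (Fin r))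
    rw [Finset.card_insert_of_notMem (by simp [had, hac]), Finset.card_insert_of_notMem (by simp [hdc]),
      Finset.card_singleton] at this
    simpa using this
  set Qs : Finset (Ideal A) := Ps ∪ (associatedPrimes.finite A A).toFinset with hQs
  have hQp : ∀ P ∈ Qs, P.IsPrime := by
    intro P hP
    rcases Finset.mem_union.1 hP with h | h
    · exact hPs P h
    · exact ((Set.Finite.mem_toFinset _).1 h).isPrime
  have F1 := fin_over (b.u a) hm Qs
  obtain ⟨ζ₀, hζ⟩ := avoidD' F1.toFinset (fun P hP => ((Set.Finite.mem_toFinset _).1 hP).1)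
    (fun _ => b.v a) (fun _ => - b.v c)
  set N := (b.u c + ζ₀ * b.u a).natDegree + 1 with hN
  obtain ⟨ζ, hζd⟩ : ∃ ζ : A[X], ζ = ζ₀ + X ^ N * b.u a := ⟨_, rfl⟩
  have h1 := Reach.uu (b := b) hac.symm ζ
  set b1 : TV r A[X] := ⟨b.u + Pi.single c (ζ * b.u a), b.w, b.v - Pi.single a (ζ * b.v c)⟩ with hb1
  have e1 : b1.u c = (b.u c + ζ₀ * b.u a) + X ^ N * (b.u a * b.u a) := by simp [hb1, hζd]; ring
  have e2 : b1.u a = b.u a := by simp [hb1, Pi.single_eq_of_ne hac]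
  have e3 : b1.v c = b.v c := by simp [hb1, Pi.single_eq_of_ne hac.symm]
  have e4 : b1.v a = b.v a - (ζ₀ + X ^ N * b.u a) * b.v c := by simp [hb1, hζd]
  have hmon : (b1.u c).Monic := by
    rw [e1]
    nontriviality A
    have hm2 : (X ^ N * (b.u a * b.u a)).Monic := (monic_X_pow N).mul (hm.mul hm)
    refine hm2.add_of_right ?_
    rw [degree_eq_natDegree hm2.ne_zero, (monic_X_pow N).natDegree_mul (hm.mul hm), natDegree_X_pow]
    refine lt_of_le_of_lt degree_le_natDegree ?_
    exact_mod_cast (by omega)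
  have F2 := fin_over (b1.u c) hmon Qs
  obtain ⟨b2, h2, g1, g2⟩ := spread F2.toFinset (fun P hP => ((Set.Finite.mem_toFinset _).1 hP).1)
    a d c had hac hdc b1 (by
      intro P hP
      obtain ⟨hPp, hfP, hPQ⟩ := (Set.Finite.mem_toFinset _).1 hP
      by_contra hcon
      push Not at hcon
      have hua : b.u a ∈ P := by rw [← e2]; exact (hcon a hac).1
      have hva : b1.v a ∈ P := (hcon a hac).2
      have hvc : b.v c ∉ P := by
        intro hv
        refine h1.uni hb P hPp (TV.In.of_uv (by rw [h1.q_eq, hq]) hPp ?_ ?_)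
        · intro i
          by_cases hi : i = c
          · rw [hi]; exact hfP
          · exact (hcon i hi).1
        · intro i
          by_cases hi : i = c
          · rw [hi, e3]; exact hv
          · exact (hcon i hi).2
      have := hζ P ((Set.Finite.mem_toFinset _).2 ⟨hPp, hua, hPQ⟩) (Or.inr (by simpa using hvc))
      apply this
      have e5 : b.v a + ζ₀ * -b.v c = b1.v a + X ^ N * b.v c * b.u a := by rw [e4]; ring
      rw [e5]
      exact P.add_mem hva (P.mul_mem_left _ hua))
  set J := (Ideal.span {b2.u c, b2.u d}).comap (C : A →+* A[X]) with hJ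
  have hJ1 : ∀ p ∈ Qs, ¬ J ≤ p := by
    intro p hp
    rw [hJ, g1]
    refine not_le_of_over _ _ hmon p (hQp p hp) ?_
    intro Q hQ hfQ hQc
    exact g2 Q ((Set.Finite.mem_toFinset _).2 ⟨hQ, hfQ, by rw [hQc]; exact hp⟩)
  have hJ2 : ¬ (J : Set A) ⊆ ⋃ p ∈ (Qs : Set (Ideal A)), (p : Set A) := by
    intro hsub
    obtain ⟨p, hp, hle⟩ := (Ideal.subset_union_prime (s := Qs) (f := fun p => p) ⊥ ⊥
      (fun p hp _ _ => hQp p hp)).1 hsub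
    exact hJ1 p hp hle
  obtain ⟨s, hsJ, hs⟩ := Set.not_subset.1 hJ2
  have hs' : ∀ p ∈ Qs, s ∉ p := by
    intro p hp hsp
    exact hs (Set.mem_biUnion (by exact hp) hsp)
  have hnz : s ∈ nonZeroDivisors A := by
    by_contra hcon
    have : s ∈ ⋃ p ∈ associatedPrimes A A, (p : Set A) := by
      rw [biUnion_associatedPrimes_eq_compl_nonZeroDivisors]; exact hcon
    obtain ⟨p, hp, hsp⟩ := Set.mem_iUnion₂.1 this
    exact hs' p (Finset.mem_union_right _ ((Set.Finite.mem_toFinset _).2 hp)) hsp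
  refine ⟨s, ?_, fun p hp => hs' p (Finset.mem_union_left _ hp)⟩
  intro t0 t1 ht
  have hsJ' : C s ∈ Ideal.span {b2.u c, b2.u d} := hsJ
  obtain ⟨x, y, hxy⟩ := Ideal.mem_span_pair.1 hsJ'
  have h12 := h1.trans h2
  have hev : ∀ t, eval t x * eval t (b2.u c) + eval t y * eval t (b2.u d) = s := by
    intro t
    have := congrArg (eval t) hxy
    simpa using this
  have hdv : ∀ p : A[X], s ^ 6 ∣ eval t1 p - eval t0 p := fun p => ht.trans (sub_dvd_eval_sub _ _ _)
  have h3 := S_lemma (i1 := c) (i2 := d) (i3 := a) hdc.symm hac.symm had.symm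
    (b2.map (evalRingHom t0)) (b2.map (evalRingHom t1)) s _ _ _ _ (hev t0) (hev t1) hnz
    (by rw [TV.q_map, TV.q_map, h12.q_eq, hq, map_zero, map_zero])
    (fun i => hdv _) (hdv _) (fun i => hdv _)
  exact (((h12.map (evalRingHom t0)).trans h3).trans (h12.map (evalRingHom t1)).symm).mono (by omega)

theorem chain [IsNoetherianRing A] (m : ℕ) (hA : ∀ P : Ideal A, P.IsPrime → P.height ≤ m)
    (b : TV r A[X]) (hq : b.q = 0) (hb : b.Uni) (a d c : Fin r)
    (had : a ≠ d) (hac : a ≠ c) (hdc : d ≠ c) (hm : (b.u a).Monic) :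
    Reach ((m + 1) * (8 * r + 4)) (b.map (evalRingHom 1)) (b.map (evalRingHom 0)) := by
  obtain ⟨s, hs, h, hh⟩ := unit_lemma m hA _ (SS b hq hb a d c had hac hdc hm)
  have key : ∀ k, Reach (k * (8 * r + 4)) (b.map (evalRingHom 1))
      (b.map (evalRingHom (1 - ∑ i ∈ Finset.range k, h i * s i ^ 6))) := by
    intro k
    induction k with
    | zero => simpa using Reach.refl (b.map (evalRingHom 1))
    | succ k ih =>
      rw [add_mul, one_mul]
      refine ih.trans (hs k _ _ ⟨-h k, ?_⟩)
      rw [Finset.sum_range_succ]; ring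
  have := key (m + 1)
  rwa [hh, sub_self] at this
end
end OddRed

set_option linter.unusedSimpArgs false
set_option linter.unusedVariables false
namespace OddRed
section
variable {R : Type*} [CommRing R] {r : ℕ}

/-- basis vector `e_f` -/
def E1 (R : Type*) [CommRing R] {r : ℕ} (f : Fin r) : TV r R := ⟨Pi.single f 1, 0, 0⟩
/-- basis vector `e_{-f}` -/
def Em (R : Type*) [CommRing R] {r : ℕ} (f : Fin r) : TV r R := ⟨0, 0, Pi.single f 1⟩

theorem run_cons (o : Op r R) (L : List (Op r R)) (b : TV r R) : run (o :: L) b = o.act (run L b) := rfl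

theorem to_e (f : Fin r) (b : TV r R) (hq : b.q = 0) (hf : b.u f = 1) :
    Reach (2 * r - 1) b (E1 R f) := by
  classical
  have hr : 0 < r := f.pos
  obtain ⟨d, hd, d1, d2, d3, d4, d5⟩ := batchUU f (fun i => - b.u i) b (Finset.univ.erase f) (by simp)
  have h1 := Reach.vw (b := d) f d.w
  set d' : TV r R := ⟨d.u, d.w - d.w * d.u f, d.v + Pi.single f (2 * d.w * d.w - d.w * d.w * d.u f)⟩ with hd'
  obtain ⟨e, he, e1, e2, e3, e4, e5⟩ := batchVU f (fun i => - d'.v i) d' (Finset.univ.erase f) (by simp)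
  have hc : (Finset.univ.erase f).card = r - 1 := by
    rw [Finset.card_erase_of_mem (Finset.mem_univ _), Finset.card_univ, Fintype.card_fin]
  rw [hc] at hd he
  have hR := (hd.trans h1).trans he
  have hdf : d.u f = 1 := by rw [d3 f (by simp), hf]
  have hu : e.u = Pi.single f 1 := by
    rw [e1]
    ext i
    by_cases hi : i = f
    · subst hi; simp [hd', hdf]
    · simp only [hd', Pi.single_eq_of_ne hi]
      rw [d2 i (by simp [hi]), hf]; ring
  have hw : e.w = 0 := by rw [e2]; simp [hd', hdf]
  have hv : ∀ i, i ≠ f → e.v i = 0 := by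
    intro i hi
    rw [e3 i (by simp [hi])]
    have : d'.u f = 1 := hdf
    rw [this]; ring
  have hvf : e.v f = 0 := by
    have := hR.q_eq
    rw [hq, TV.q, hw, hu, Finset.sum_eq_single f] at this
    · simpa using this
    · intro i _ hi; rw [Pi.single_eq_of_ne hi, zero_mul]
    · simp
  have : e = E1 R f := by
    ext i
    · rw [hu]; rfl
    · rw [hw]; rfl
    · by_cases hi : i = f
      · rw [hi, hvf]; rfl
      · rw [hv i hi]; rfl
  rw [← this]
  exact hR.mono (by omega)

theorem fix_aux (f : Fin r) (J : Finset (Fin r)) (hJ : f ∉ J) (b : TV r R) (hf : b.v f = 1) :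
    ∃ L : List (Op r R), L.length ≤ 2 * J.card ∧ run L (E1 R f) = E1 R f ∧ (run L b).v f = 1 ∧
      ∀ j ∈ J, (run L b).u j = 0 ∧ (run L b).v j = 0 := by
  classical
  induction J using Finset.induction_on with
  | empty => exact ⟨[], by simp, rfl, hf, by simp⟩
  | insert j J hj ih =>
    simp only [Finset.mem_insert, not_or] at hJ
    obtain ⟨L, h1, h2, h3, h4⟩ := ih hJ.2
    set d := run L b with hd
    have hfj := hJ.1
    refine ⟨.uu f j hfj (d.v j) :: .uv j f (Ne.symm hfj) (- d.u j) :: L, ?_, ?_, ?_, ?_⟩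
    · rw [Finset.card_insert_of_notMem hj]; simp; omega
    · rw [run_cons, run_cons, h2]
      ext i <;> simp [Op.act, E1, Pi.single_eq_of_ne (Ne.symm hfj)]
    · rw [run_cons, run_cons, ← hd]
      simp [Op.act, h3, Pi.single_eq_of_ne hfj]
    · intro i hi
      rw [run_cons, run_cons, ← hd]
      rcases Finset.mem_insert.1 hi with rfl | hiJ
      · simp [Op.act, h3, Pi.single_eq_of_ne (Ne.symm hfj)]
      · have n1 : i ≠ j := by rintro rfl; exact hj hiJ
        have n2 : i ≠ f := by rintro rfl; exact hJ.2 hiJ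
        simp [Op.act, Pi.single_eq_of_ne n1, Pi.single_eq_of_ne n2, h4 i hiJ]

theorem fix_last (f : Fin r) (b : TV r R) (hq : b.q = 0) (hf : b.v f = 1) :
    ∃ L : List (Op r R), L.length ≤ 2 * r - 1 ∧ run L (E1 R f) = E1 R f ∧ run L b = Em R f := by
  classical
  have hr : 0 < r := f.pos
  obtain ⟨L, h1, h2, h3, h4⟩ := fix_aux f (Finset.univ.erase f) (by simp) b hf
  have hc : (Finset.univ.erase f).card = r - 1 := by
    rw [Finset.card_erase_of_mem (Finset.mem_univ _), Finset.card_univ, Fintype.card_fin]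
  rw [hc] at h1
  set d := run L b with hd
  have hqq : (run (.uw f d.w :: L) b).q = 0 := by
    rw [Reach.q_eq ⟨.uw f d.w :: L, le_rfl, rfl⟩, hq]
  refine ⟨.uw f d.w :: L, by simp; omega, ?_, ?_⟩
  · rw [run_cons, h2]
    ext i <;> simp [Op.act, E1]
  · change (Op.act (.uw f d.w) d).q = 0 at hqq
    change Op.act (.uw f d.w) d = _
    set e := Op.act (.uw f d.w) d with he
    have hw : e.w = 0 := by simp [he, Op.act, h3]
    have hv : e.v = Pi.single f 1 := by
      ext i
      by_cases hi : i = f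
      · subst hi; simp [he, Op.act, h3]
      · simp [he, Op.act, Pi.single_eq_of_ne hi, h4 i (by simp [hi])]
    have hu : ∀ i, i ≠ f → e.u i = 0 := by
      intro i hi
      simp [he, Op.act, Pi.single_eq_of_ne hi, h4 i (by simp [hi])]
    have huf : e.u f = 0 := by
      rw [TV.q, hw, hv, Finset.sum_eq_single f] at hqq
      · simpa using hqq
      · intro i _ hi; rw [Pi.single_eq_of_ne hi, mul_zero]
      · simp
    ext i
    · by_cases hi : i = f
      · rw [hi, huf]; rfl
      · rw [hu i hi]; rfl
    · rw [hw]; rfl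
    · rw [hv]; rfl

theorem vec_reduce (C₀ : Type*) [CommRing C₀] [IsNoetherianRing C₀] (n D : ℕ)
    (hdim : ringKrullDim C₀ = (D : WithBot ℕ∞)) (h3 : 3 ≤ r) (hr : D + 2 ≤ r)
    (b : TV r (MvPolynomial (Fin n) C₀)) (hq : b.q = 0) (hb : b.Uni) :
    Reach ((n + D + 1) * (8 * r + 4) + 8 * (r - 1) + (2 * r - 1)) b
      (E1 (MvPolynomial (Fin n) C₀) (⟨0, by omega⟩ : Fin r)) := by
  obtain ⟨ι, S, hS1, hS2, hS3⟩ := good_mv C₀ hdim n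
  let f : Fin r := ⟨0, by omega⟩
  let l : Fin r := ⟨1, by omega⟩
  let k : Fin r := ⟨2, by omega⟩
  have hfl : f ≠ l := by simp [f, l]
  have hfk : f ≠ k := by simp [f, k]
  have hlk : l ≠ k := by simp [l, k]
  obtain ⟨b1, R1, hb1⟩ := lemmaG S D hS1 hS2 hr b hq hb f l hfl
  obtain ⟨Γ, ε, g1, g2, g3⟩ := hS3 _ hb1
  have hq1 : b1.q = 0 := by rw [R1.q_eq, hq]
  have hu1 := R1.uni hb
  have hdimA : ∀ P : Ideal (MvPolynomial (Fin n) C₀), P.IsPrime → P.height ≤ ((n + D : ℕ) : ℕ∞) := by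
    intro P hP
    have := Ideal.height_le_ringKrullDim_of_isPrime (I := P)
    rw [MvPolynomial.ringKrullDim_of_isNoetherianRing, hdim, Nat.card_fin] at this
    rw [add_comm n D]
    exact_mod_cast this
  have R2 := chain (n + D) hdimA (b1.map Γ) (by rw [TV.q_map, hq1, map_zero]) (hu1.map Γ) f l k
    hfl hfk hlk g1
  have e1 : (b1.map Γ).map (Polynomial.evalRingHom 1) = b1 := by
    refine TV.ext (funext fun i => ?_) ?_ (funext fun i => ?_)
    · exact g2 _
    · exact g2 _
    · exact g2 _
  have e0 : (b1.map Γ).map (Polynomial.evalRingHom 0) = (b1.map ε).map ι := by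
    refine TV.ext (funext fun i => ?_) ?_ (funext fun i => ?_)
    · exact g3 _
    · exact g3 _
    · exact g3 _
  rw [e1, e0] at R2
  obtain ⟨c, R3, hc⟩ := lemmaG (⊥ : Submonoid C₀) D (by
      intro P hP _
      have := Ideal.height_le_ringKrullDim_of_isPrime (I := P)
      rw [hdim] at this
      exact_mod_cast this) (by
      intro a σ hσ
      rw [Submonoid.mem_bot] at hσ
      exact ⟨1 - a, by rw [hσ, Submonoid.mem_bot]; ring⟩) hr (b1.map ε)
    (by rw [TV.q_map, hq1, map_zero]) (hu1.map ε) f l hfl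
  rw [Submonoid.mem_bot] at hc
  have R4 := to_e f c (by rw [R3.q_eq, TV.q_map, hq1, map_zero]) hc
  have R5 := (R3.trans R4).map ι
  have e2 : (E1 C₀ f).map ι = E1 (MvPolynomial (Fin n) C₀) f := by
    refine TV.ext (funext fun i => ?_) ?_ (funext fun i => ?_)
    · by_cases hi : i = f
      · subst hi; simp [E1, TV.map]
      · simp [E1, TV.map, Pi.single_eq_of_ne hi]
    · simp [E1, TV.map]
    · simp [E1, TV.map]
  rw [e2] at R5
  refine ((R1.trans R2).trans R5).mono ?_
  omega
end
end OddRed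

set_option linter.unusedSimpArgs false
set_option linter.unusedVariables false
set_option linter.unusedSectionVars false
namespace OddRed
section
variable {R : Type*} [CommRing R] {r : ℕ}

/-- position of `e_i` -/
def pu (i : Fin r) : Fin (2 * r + 1) := ⟨i.val, by omega⟩
/-- position of `e_{-i}` -/
def pv (i : Fin r) : Fin (2 * r + 1) := ⟨2 * r - i.val, by omega⟩

/-- blocks of a column -/
def ofvec (x : Fin (2 * r + 1) → R) : TV r R := ⟨fun i => x (pu i), x (midO r), fun i => x (pv i)⟩

theorem quadO_eq (x : Fin (2 * r + 1) → R) : quadO r x = (ofvec x).q := rfl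

theorem ofvec_inj {x y : Fin (2 * r + 1) → R} (h : ofvec x = ofvec y) : x = y := by
  ext k
  have h1 := congrArg TV.u h
  have h2 := congrArg TV.w h
  have h3 := congrArg TV.v h
  rcases lt_trichotomy k.val r with hk | hk | hk
  · have := congrFun h1 ⟨k.val, hk⟩
    exact this
  · have : k = midO r := Fin.ext hk
    rw [this]; exact h2
  · have := congrFun h3 ⟨2 * r - k.val, by omega⟩
    have hk' : pv (⟨2 * r - k.val, by omega⟩ : Fin r) = k := Fin.ext (by simp [pv]; omega)
    simp only [ofvec, hk'] at this
    exact this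

theorem negO_pu (i : Fin r) : negO r (pu i) = pv i := rfl
theorem negO_pv (i : Fin r) : negO r (pv i) = pu i := Fin.ext (by simp [negO, pu, pv]; omega)
theorem pu_ne_mid (i : Fin r) : pu i ≠ midO r := by
  intro h; have := congrArg Fin.val h; simp [pu, midO] at this; omega
theorem pv_ne_mid (i : Fin r) : pv i ≠ midO r := by
  intro h; have := congrArg Fin.val h; simp [pv, midO] at this; omega
theorem pu_ne_pv (i j : Fin r) : pu i ≠ pv j := by
  intro h; have := congrArg Fin.val h; simp [pu, pv] at this; omega
theorem pu_inj {i j : Fin r} : pu i = pu j ↔ i = j := by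
  refine ⟨fun h => ?_, fun h => h ▸ rfl⟩
  have := congrArg Fin.val h; simp [pu] at this; exact Fin.ext this
theorem pv_inj {i j : Fin r} : pv i = pv j ↔ i = j := by
  refine ⟨fun h => ?_, fun h => h ▸ rfl⟩
  have := congrArg Fin.val h; simp [pv] at this; exact Fin.ext (by omega)

theorem TOlong_mulVec (i j : Fin (2 * r + 1)) (ξ : R) (x : Fin (2 * r + 1) → R) :
    TOlong r i j ξ *ᵥ x = x + Pi.single i (ξ * x j) - Pi.single (negO r j) (ξ * x (negO r i)) := by
  rw [TOlong, sub_mulVec, add_mulVec, one_mulVec, smul_mulVec, smul_mulVec, single_mulVec, single_mulVec]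
  ext k
  simp [Pi.single_apply, Function.update_apply]

theorem TOshort_mulVec (i : Fin (2 * r + 1)) (ξ : R) (x : Fin (2 * r + 1) → R) :
    TOshort r i ξ *ᵥ x = x + Pi.single i (2 * ξ * x (midO r)) - Pi.single (midO r) (ξ * x (negO r i))
      - Pi.single i (ξ * ξ * x (negO r i)) := by
  rw [TOshort, sub_mulVec, sub_mulVec, add_mulVec, one_mulVec, smul_mulVec, smul_mulVec, smul_mulVec,
    single_mulVec, single_mulVec, single_mulVec]
  ext k
  simp [Pi.single_apply, Function.update_apply]

theorem op_matrix (o : Op r R) : ∃ M : Matrix (Fin (2 * r + 1)) (Fin (2 * r + 1)) R,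
    IsElemO r M ∧ ∀ x, ofvec (M *ᵥ x) = o.act (ofvec x) := by
  cases o with
  | uu i j h ξ =>
    refine ⟨TOlong r (pu i) (pu j) ξ, Or.inl ⟨_, _, ξ, pu_ne_mid i, pu_ne_mid j,
      fun h' => h (pu_inj.1 h'), pu_ne_pv i j, rfl⟩, fun x => ?_⟩
    rw [TOlong_mulVec, negO_pu, negO_pu]
    ext k <;> simp [ofvec, Op.act, Pi.single_apply, pu_inj, pv_inj, pu_ne_pv, (pu_ne_pv _ _).symm,
      pu_ne_mid, (pu_ne_mid _).symm, pv_ne_mid, (pv_ne_mid _).symm]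
  | uv i j h ξ =>
    refine ⟨TOlong r (pu i) (pv j) ξ, Or.inl ⟨_, _, ξ, pu_ne_mid i, pv_ne_mid j,
      pu_ne_pv i j, by rw [negO_pv]; exact fun h' => h (pu_inj.1 h'), rfl⟩, fun x => ?_⟩
    rw [TOlong_mulVec, negO_pu, negO_pv]
    ext k <;> simp [ofvec, Op.act, Pi.single_apply, pu_inj, pv_inj, pu_ne_pv, (pu_ne_pv _ _).symm,
      pu_ne_mid, (pu_ne_mid _).symm, pv_ne_mid, (pv_ne_mid _).symm]
  | vu i j h ξ =>
    refine ⟨TOlong r (pv i) (pu j) ξ, Or.inl ⟨_, _, ξ, pv_ne_mid i, pu_ne_mid j,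
      (pu_ne_pv j i).symm, by rw [negO_pu]; exact fun h' => h (pv_inj.1 h'), rfl⟩, fun x => ?_⟩
    rw [TOlong_mulVec, negO_pu, negO_pv]
    ext k <;> simp [ofvec, Op.act, Pi.single_apply, pu_inj, pv_inj, pu_ne_pv, (pu_ne_pv _ _).symm,
      pu_ne_mid, (pu_ne_mid _).symm, pv_ne_mid, (pv_ne_mid _).symm]
  | vw i ξ =>
    refine ⟨TOshort r (pv i) ξ, Or.inr ⟨_, ξ, pv_ne_mid i, rfl⟩, fun x => ?_⟩
    rw [TOshort_mulVec, negO_pv]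
    ext k <;> simp [ofvec, Op.act, Pi.single_apply, pu_inj, pv_inj, pu_ne_pv, (pu_ne_pv _ _).symm,
      pu_ne_mid, (pu_ne_mid _).symm, pv_ne_mid, (pv_ne_mid _).symm]
    split_ifs <;> ring
  | uw i ξ =>
    refine ⟨TOshort r (pu i) ξ, Or.inr ⟨_, ξ, pu_ne_mid i, rfl⟩, fun x => ?_⟩
    rw [TOshort_mulVec, negO_pu]
    ext k <;> simp [ofvec, Op.act, Pi.single_apply, pu_inj, pv_inj, pu_ne_pv, (pu_ne_pv _ _).symm,
      pu_ne_mid, (pu_ne_mid _).symm, pv_ne_mid, (pv_ne_mid _).symm]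
    split_ifs <;> ring

theorem run_matrix (L : List (Op r R)) : ∃ E ∈ EOO r L.length R, ∀ x, ofvec (E *ᵥ x) = run L (ofvec x) := by
  induction L with
  | nil => exact ⟨1, ⟨[], by simp⟩, fun x => by rw [one_mulVec]; rfl⟩
  | cons o L ih =>
    obtain ⟨E, ⟨K, k1, k2, rfl⟩, hE⟩ := ih
    obtain ⟨M, hM, hM'⟩ := op_matrix o
    refine ⟨M * K.prod, ⟨M :: K, by simpa using k1, ?_, by simp⟩, ?_⟩
    · intro m hm
      rcases List.mem_cons.1 hm with rfl | hm
      · exact hM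
      · exact k2 m hm
    · intro x
      rw [← mulVec_mulVec, hM', hE]; rfl

theorem run_inv (L : List (Op r R)) : ∃ L' : List (Op r R), ∀ b, run L' (run L b) = b := by
  induction L with
  | nil => exact ⟨[], fun b => rfl⟩
  | cons o L ih =>
    obtain ⟨L', h⟩ := ih
    refine ⟨L' ++ [o.inv], fun b => ?_⟩
    rw [run_append]
    change run L' (o.inv.act (o.act (run L b))) = b
    rw [Op.inv_act, h]

theorem run_matrix_OO (L : List (Op r R)) : ∃ E ∈ EOO r L.length R, E ∈ OO r R ∧
    ∀ x, ofvec (E *ᵥ x) = run L (ofvec x) := by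
  obtain ⟨E, h1, h2⟩ := run_matrix L
  obtain ⟨L', hL'⟩ := run_inv L
  obtain ⟨E', -, h3⟩ := run_matrix L'
  refine ⟨E, h1, ⟨?_, ?_⟩, h2⟩
  · have : E' * E = 1 := by
      apply Matrix.ext_of_mulVec_single
      intro i
      apply ofvec_inj
      rw [← mulVec_mulVec, h3, h2, hL', one_mulVec]
    exact IsUnit.of_mul_eq_one_right _ this
  · intro x
    rw [quadO_eq, quadO_eq, h2]
    exact Reach.q_eq ⟨L, le_rfl, rfl⟩

theorem EOO_mul {M N : ℕ} {E F : Matrix (Fin (2 * r + 1)) (Fin (2 * r + 1)) R} (hE : E ∈ EOO r M R)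
    (hF : F ∈ EOO r N R) : E * F ∈ EOO r (M + N) R := by
  obtain ⟨K, k1, k2, rfl⟩ := hE
  obtain ⟨K', k1', k2', rfl⟩ := hF
  refine ⟨K ++ K', by simp; omega, ?_, by simp⟩
  intro m hm
  rcases List.mem_append.1 hm with h | h
  · exact k2 m h
  · exact k2' m h

theorem EOO_mono {M N : ℕ} (h : M ≤ N) {E : Matrix (Fin (2 * r + 1)) (Fin (2 * r + 1)) R}
    (hE : E ∈ EOO r M R) : E ∈ EOO r N R := by
  obtain ⟨K, k1, k2, rfl⟩ := hE
  exact ⟨K, k1.trans h, k2, rfl⟩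

theorem OO_mul {E F : Matrix (Fin (2 * r + 1)) (Fin (2 * r + 1)) R} (hE : E ∈ OO r R) (hF : F ∈ OO r R) :
    E * F ∈ OO r R :=
  ⟨hE.1.mul hF.1, fun x => by rw [← mulVec_mulVec, hE.2, hF.2]⟩

theorem ofvec_e (f : Fin r) : ofvec (Pi.single (pu f) (1 : R)) = E1 R f := by
  ext k <;> simp [ofvec, E1, Pi.single_apply, pu_inj, pv_inj, pu_ne_pv, (pu_ne_pv _ _).symm,
      pu_ne_mid, (pu_ne_mid _).symm, pv_ne_mid, (pv_ne_mid _).symm]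

theorem ofvec_em (f : Fin r) : ofvec (Pi.single (pv f) (1 : R)) = Em R f := by
  ext k <;> simp [ofvec, Em, Pi.single_apply, pu_inj, pv_inj, pu_ne_pv, (pu_ne_pv _ _).symm,
      pu_ne_mid, (pu_ne_mid _).symm, pv_ne_mid, (pv_ne_mid _).symm]

theorem quad_add_e (f : Fin r) (x : Fin (2 * r + 1) → R) :
    quadO r (x + Pi.single (pu f) 1) = quadO r x + x (pv f) := by
  rw [quadO_eq, quadO_eq]
  simp only [TV.q, ofvec, Pi.add_apply, Pi.single_apply, pu_inj, pv_inj, (pu_ne_pv _ _).symm,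
    (pu_ne_mid _).symm, if_false, add_zero, add_mul, Finset.sum_add_distrib, ite_mul, one_mul, zero_mul,
    Finset.sum_ite_eq', Finset.mem_univ, if_true]
  ring

theorem quad_add_em (f : Fin r) (x : Fin (2 * r + 1) → R) :
    quadO r (x + Pi.single (pv f) 1) = quadO r x + x (pu f) := by
  rw [quadO_eq, quadO_eq]
  simp only [TV.q, ofvec, Pi.add_apply, Pi.single_apply, pu_inj, pv_inj, (pu_ne_pv _ _),
    (pv_ne_mid _).symm, if_false, add_zero, mul_add, Finset.sum_add_distrib, mul_ite, mul_one, mul_zero,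
    Finset.sum_ite_eq', Finset.mem_univ, if_true]
  ring

theorem row_v (f : Fin r) {g : Matrix (Fin (2 * r + 1)) (Fin (2 * r + 1)) R} (hg : g ∈ OO r R)
    (h : g *ᵥ Pi.single (pu f) 1 = Pi.single (pu f) 1) (x : Fin (2 * r + 1) → R) :
    (g *ᵥ x) (pv f) = x (pv f) := by
  have h1 := hg.2 (x + Pi.single (pu f) 1)
  rw [mulVec_add, h, quad_add_e, quad_add_e, hg.2] at h1
  exact add_left_cancel h1

theorem row_u (f : Fin r) {g : Matrix (Fin (2 * r + 1)) (Fin (2 * r + 1)) R} (hg : g ∈ OO r R)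
    (h : g *ᵥ Pi.single (pv f) 1 = Pi.single (pv f) 1) (x : Fin (2 * r + 1) → R) :
    (g *ᵥ x) (pu f) = x (pu f) := by
  have h1 := hg.2 (x + Pi.single (pv f) 1)
  rw [mulVec_add, h, quad_add_em, quad_add_em, hg.2] at h1
  exact add_left_cancel h1

theorem E1_q (f : Fin r) : (E1 R f).q = 0 := by simp [E1, TV.q]
theorem Em_q (f : Fin r) : (Em R f).q = 0 := by simp [Em, TV.q]

theorem col_uni (f : Fin r) {g : Matrix (Fin (2 * r + 1)) (Fin (2 * r + 1)) R} (hg : g ∈ OO r R) :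
    (ofvec (g *ᵥ Pi.single (pu f) 1)).Uni := by
  intro P hP hin
  obtain ⟨g', hg'⟩ := hg.1.exists_left_inv
  apply hP.ne_top
  rw [Ideal.eq_top_iff_one]
  have hall : ∀ k, (g *ᵥ Pi.single (pu f) 1) k ∈ P := by
    intro k
    rcases lt_trichotomy k.val r with hk | hk | hk
    · exact hin.1 ⟨k.val, hk⟩
    · have : k = midO r := Fin.ext hk
      rw [this]; exact hin.2.1
    · have hk' : pv (⟨2 * r - k.val, by omega⟩ : Fin r) = k := Fin.ext (by simp [pv]; omega)
      have := hin.2.2 ⟨2 * r - k.val, by omega⟩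
      simp only [ofvec, hk'] at this
      exact this
  have h1 : (g' *ᵥ (g *ᵥ Pi.single (pu f) 1)) (pu f) = 1 := by
    rw [mulVec_mulVec, hg', one_mulVec]; simp
  rw [← h1, mulVec, dotProduct]
  exact P.sum_mem fun k _ => P.mul_mem_left _ (hall k)
end

section
variable {R : Type*} [CommRing R] {s : ℕ}

/-- embedding of the inner indices -/
def emb (i : Fin (2 * s + 1)) : Fin (2 * (s + 1) + 1) := ⟨i.val + 1, by omega⟩

theorem sum_emb (F : Fin (2 * (s + 1) + 1) → R) :
    ∑ k, F k = F ⟨0, by omega⟩ + ∑ i, F (emb i) + F ⟨2 * (s + 1), by omega⟩ := by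
  have h : ∑ k : Fin ((2 * s + 1) + 1 + 1), F k = _ := Fin.sum_univ_castSucc (n := 2 * s + 1 + 1) F
  have h2 := Fin.sum_univ_succ (n := 2 * s + 1) (fun i => F (Fin.castSucc i))
  rw [h2] at h
  exact h

theorem quad_emb (z : Fin (2 * (s + 1) + 1) → R) (hz : z ⟨0, by omega⟩ = 0) :
    quadO (s + 1) z = quadO s (fun i => z (emb i)) := by
  unfold quadO
  rw [Fin.sum_univ_succ]
  have h0 : z ⟨((0 : Fin (s + 1)) : ℕ), by omega⟩ = 0 := hz
  rw [h0, zero_mul, zero_add]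
  congr 1
  refine Finset.sum_congr rfl fun i _ => ?_
  have e1 : (⟨2 * (s + 1) - (i.succ : Fin (s+1)).val, by omega⟩ : Fin (2 * (s + 1) + 1)) =
      emb ⟨2 * s - i.val, by omega⟩ := Fin.ext (by simp [emb]; omega)
  rw [e1]; rfl

theorem beta_OO {g : Matrix (Fin (2 * (s + 1) + 1)) (Fin (2 * (s + 1) + 1)) R} (hg : g ∈ OO (s + 1) R)
    (h0 : ∀ x, (g *ᵥ x) ⟨0, by omega⟩ = x ⟨0, by omega⟩)
    (h1 : ∀ x, (g *ᵥ x) ⟨2 * (s + 1), by omega⟩ = x ⟨2 * (s + 1), by omega⟩) :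
    (Matrix.of fun i j => g (emb i) (emb j)) ∈ OO s R := by
  constructor
  · obtain ⟨g', hg'⟩ := hg.1.exists_left_inv
    refine IsUnit.of_mul_eq_one_right (Matrix.of fun i j => g' (emb i) (emb j)) ?_
    ext i j
    have hk := congrFun (congrFun hg' (emb i)) (emb j)
    rw [mul_apply, sum_emb] at hk
    have a0 : g ⟨0, by omega⟩ (emb j) = 0 := by
      have := h0 (Pi.single (emb j) 1)
      rw [mulVec_single_one, Pi.single_eq_of_ne (by intro h; simpa [emb] using congrArg Fin.val h)] at this
      exact this
    have a1 : g ⟨2 * (s + 1), by omega⟩ (emb j) = 0 := by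
      have := h1 (Pi.single (emb j) 1)
      rw [mulVec_single_one, Pi.single_eq_of_ne (by
        intro h; have := congrArg Fin.val h; simp [emb] at this; omega)] at this
      exact this
    rw [a0, a1, mul_zero, mul_zero, zero_add, add_zero] at hk
    rw [mul_apply]
    simp only [of_apply]
    rw [hk, one_apply, one_apply]
    have : emb i = emb j ↔ i = j := by simp [emb, Fin.ext_iff]
    simp [this]
  · intro y
    let z : Fin (2 * (s + 1) + 1) → R := fun k =>
      if h : 1 ≤ k.val ∧ k.val < 2 * s + 2 then y ⟨k.val - 1, by omega⟩ else 0
    have z0 : z ⟨0, by omega⟩ = 0 := by simp [z]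
    have z1 : z ⟨2 * (s + 1), by omega⟩ = 0 := by simp [z]; intros; omega
    have ze : ∀ i, z (emb i) = y i := by
      intro i
      have : 1 ≤ (emb i).val ∧ (emb i).val < 2 * s + 2 := by simp [emb]; omega
      simp only [z, dif_pos this]
      rfl
    have hq := hg.2 z
    rw [quad_emb z z0, quad_emb _ (by rw [h0, z0])] at hq
    have e1 : (fun i => z (emb i)) = y := funext ze
    have e2 : (fun i => (g *ᵥ z) (emb i)) = (Matrix.of fun i j => g (emb i) (emb j)) *ᵥ y := by
      ext i
      rw [mulVec, dotProduct, sum_emb, z0, z1, mul_zero, mul_zero, zero_add, add_zero]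
      simp only [ze]
      rfl
    rw [e1, e2] at hq
    exact hq
end
end OddRed

namespace OddRed
theorem count_le (n D s a b : ℕ) (h3 : 3 ≤ s + 1) (hD : D + 2 ≤ s + 1)
    (ha : a ≤ (n + D + 1) * (8 * (s + 1) + 4) + 8 * (s + 1 - 1) + (2 * (s + 1) - 1))
    (hb : b ≤ 2 * (s + 1) - 1) :
    b + a ≤ n * (12 * (s + 1) - 8) +
      (n * D + (s + 1) * (s + 1 - 1) / 2) *
        ((s + 1) * (s + 1 - 1) / 2 + (s + 1 - 1 + 1) / 2 + 9 * (s + 1) - 2) + 11 * (s + 1) - 9 := by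
  have hT : s + 1 ≤ (s + 1) * (s + 1 - 1) / 2 := by
    rw [Nat.le_div_iff_mul_le (by norm_num), Nat.add_sub_cancel]
    exact Nat.mul_le_mul_left _ (by omega)
  generalize (s + 1) * (s + 1 - 1) / 2 = T at hT ⊢
  have hK : 8 * (s + 1) + 4 + 1 ≤ T + (s + 1 - 1 + 1) / 2 + 9 * (s + 1) - 2 := by omega
  generalize T + (s + 1 - 1 + 1) / 2 + 9 * (s + 1) - 2 = K at hK ⊢
  have h1 : n * (8 * (s + 1) + 4) ≤ n * (12 * (s + 1) - 8) := Nat.mul_le_mul_left _ (by omega)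
  have h2 : (D + 2) * (8 * (s + 1) + 4 + 1) ≤ (n * D + T) * K :=
    Nat.mul_le_mul (by omega) hK
  have h4 : (n + D + 1) * (8 * (s + 1) + 4) = n * (8 * (s + 1) + 4) + (D + 1) * (8 * (s + 1) + 4) := by ring
  have h5 : (D + 2) * (8 * (s + 1) + 4 + 1) = (D + 1) * (8 * (s + 1) + 4) + (8 * (s + 1) + 4) + (D + 2) := by
    ring
  omega
end OddRed

/-- Bounded reduction for the odd split orthogonal group over a polynomial ring:
any `g ∈ O(2r+1, C[x_1,…,x_n])` can be reduced by at most
`N = n(12r−8) + (nD + r(r−1)/2)(r(r−1)/2 + ⌈(r−1)/2⌉ + 9r−2) + 11r−9`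
elementary orthogonal transvections (multiplied from the left) to `diag(1, β, 1)`
with `β ∈ O(2r−1, C[x_1,…,x_n])`. -/
theorem odd_matrix_bounded_reduction
    (C : Type*) [CommRing C] [IsNoetherianRing C] (n D : ℕ)
    (hdim : ringKrullDim C = (D : WithBot ℕ∞))
    (r : ℕ) (hr : max 3 (D + 2) ≤ r)
    (g : Matrix (Fin (2 * r + 1)) (Fin (2 * r + 1)) (MvPolynomial (Fin n) C))
    (hg : g ∈ OO r (MvPolynomial (Fin n) C)) :
    ∃ E ∈ EOO r
        (n * (12 * r - 8) +
          (n * D + r * (r - 1) / 2) * (r * (r - 1) / 2 + (r - 1 + 1) / 2 + 9 * r - 2) +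
            11 * r - 9)
        (MvPolynomial (Fin n) C),
      ∃ β ∈ OO (r - 1) (MvPolynomial (Fin n) C),
        (E * g) ⟨0, by omega⟩ ⟨0, by omega⟩ = 1 ∧
        (E * g) ⟨2 * r, by omega⟩ ⟨2 * r, by omega⟩ = 1 ∧
        (∀ j : Fin (2 * r + 1), j.val ≠ 0 →
          (E * g) ⟨0, by omega⟩ j = 0 ∧ (E * g) j ⟨0, by omega⟩ = 0) ∧
        (∀ j : Fin (2 * r + 1), j.val ≠ 2 * r →
          (E * g) ⟨2 * r, by omega⟩ j = 0 ∧ (E * g) j ⟨2 * r, by omega⟩ = 0) ∧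
        ∀ i j : Fin (2 * (r - 1) + 1),
          (E * g) ⟨i.val + 1, by omega⟩ ⟨j.val + 1, by omega⟩ = β i j := by
  have h3 : 3 ≤ r := (le_max_left _ _).trans hr
  have hD : D + 2 ≤ r := (le_max_right _ _).trans hr
  obtain ⟨s, rfl⟩ : ∃ s, r = s + 1 := ⟨r - 1, by omega⟩
  let f : Fin (s + 1) := ⟨0, by omega⟩
  have hq0 : (OddRed.ofvec (g *ᵥ Pi.single (OddRed.pu f) 1)).q = 0 := by
    rw [← OddRed.quadO_eq, hg.2, OddRed.quadO_eq, OddRed.ofvec_e, OddRed.E1_q]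
  obtain ⟨L, hL1, hL2⟩ := OddRed.vec_reduce C n D hdim h3 hD _ hq0 (OddRed.col_uni f hg)
  obtain ⟨E, hE1, hE2, hE3⟩ := OddRed.run_matrix_OO L
  have hg1 : E * g ∈ OO (s + 1) (MvPolynomial (Fin n) C) := OddRed.OO_mul hE2 hg
  have hc1 : (E * g) *ᵥ Pi.single (OddRed.pu f) 1 = Pi.single (OddRed.pu f) 1 := by
    apply OddRed.ofvec_inj
    rw [← mulVec_mulVec, hE3, hL2, OddRed.ofvec_e]
  have hq1 : (OddRed.ofvec ((E * g) *ᵥ Pi.single (OddRed.pv f) 1)).q = 0 := by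
    rw [← OddRed.quadO_eq, hg1.2, OddRed.quadO_eq, OddRed.ofvec_em, OddRed.Em_q]
  obtain ⟨L', hL1', hL2', hL3'⟩ := OddRed.fix_last f _ hq1 (by
    change ((E * g) *ᵥ Pi.single (OddRed.pv f) 1) (OddRed.pv f) = 1
    rw [OddRed.row_v f hg1 hc1]; simp)
  obtain ⟨E', hE1', hE2', hE3'⟩ := OddRed.run_matrix_OO L'
  have hg2 : (E' * E) * g ∈ OO (s + 1) (MvPolynomial (Fin n) C) := by
    rw [mul_assoc]; exact OddRed.OO_mul hE2' hg1
  have hc2 : ((E' * E) * g) *ᵥ Pi.single (OddRed.pu f) 1 = Pi.single (OddRed.pu f) 1 := by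
    apply OddRed.ofvec_inj
    rw [mul_assoc, ← mulVec_mulVec, hE3', hc1, OddRed.ofvec_e, hL2']
  have hc3 : ((E' * E) * g) *ᵥ Pi.single (OddRed.pv f) 1 = Pi.single (OddRed.pv f) 1 := by
    apply OddRed.ofvec_inj
    rw [mul_assoc, ← mulVec_mulVec, hE3', hL3', OddRed.ofvec_em]
  have hrv := OddRed.row_v f hg2 hc2
  have hru := OddRed.row_u f hg2 hc3
  refine ⟨E' * E, OddRed.EOO_mono ?_ (OddRed.EOO_mul hE1' hE1), _, OddRed.beta_OO hg2 hru hrv,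
    ?_, ?_, ?_, ?_, fun i j => rfl⟩
  · exact OddRed.count_le n D s L.length L'.length h3 hD hL1 hL1'
  · have := congrFun hc2 (OddRed.pu f)
    rw [mulVec_single_one, Pi.single_eq_same] at this
    exact this
  · have := congrFun hc3 (OddRed.pv f)
    rw [mulVec_single_one, Pi.single_eq_same] at this
    exact this
  · intro j hj
    have hj' : j ≠ OddRed.pu f := fun h => hj (by rw [h]; rfl)
    constructor
    · have := hru (Pi.single j 1)
      rw [mulVec_single_one, Pi.single_eq_of_ne hj'.symm] at this
      exact this
    · have := congrFun hc2 j
      rw [mulVec_single_one, Pi.single_eq_of_ne hj'] at this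
      exact this
  · intro j hj
    have hj' : j ≠ OddRed.pv f := fun h => hj (by rw [h]; rfl)
    constructor
    · have := hrv (Pi.single j 1)
      rw [mulVec_single_one, Pi.single_eq_of_ne hj'.symm] at this
      exact this
    · have := congrFun hc3 j
      rw [mulVec_single_one, Pi.single_eq_of_ne hj'] at this
      exact this
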